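/- arXiv:2006.00673 — 10 statements merged into one kernel-verified Lean document; each statement's English description precedes it below -/
import Mathlib

section
/- Let n ≥ 2 and let T be a finite multiset over the cyclic group ZMod n that is zero-sum free and has length |T| = n − 1. Then there exists g ∈ ZMod n of additive order n such that T consists of the element g repeated n − 1 times. -/
/-!
For a multiset `T`, let `Σ₀(T)` be the set of sums of all its sub-multisets (the empty one
included). If `a ::ₘ T` is zero-sum free then `Σ₀(T)` is a proper subset of `Σ₀(a ::ₘ T)`:
otherwise `Σ₀(T)` would be closed under adding `a`, hence would contain `(n - 1) • a = -a`, and a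
sub-multiset of `T` with sum `-a` together with `a` sums to zero (`card_allSums_cons`).

If `T` had two distinct elements `a` and `b`, then `0, a, b, a + b` would be four distinct members
of `Σ₀({a, b})`, and adding the remaining elements one by one would give
`|Σ₀(T)| ≥ |T| + 2 = n + 1 > n` (`card_allSums_add_pair`). So `T` is constant, and its element has
order `n`, as a smaller order would give a zero-sum sub-multiset.
-/

open Multiset

/-- `T` has no nonempty sub-multiset summing to zero. -/
def ZeroSumFree {n : ℕ} (T : Multiset (ZMod n)) : Prop :=
  ∀ U : Multiset (ZMod n), U ≤ T → U ≠ 0 → U.sum ≠ 0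

/-- `T` is nonempty, sums to zero, and no nonempty proper sub-multiset sums to zero. -/
def MinimalZeroSum {n : ℕ} (T : Multiset (ZMod n)) : Prop :=
  T ≠ 0 ∧ T.sum = 0 ∧ ∀ U : Multiset (ZMod n), U < T → U ≠ 0 → U.sum ≠ 0

/-- The set of sums of nonempty sub-multisets of `S`. -/
def subSums (S : Multiset ℕ) : Set ℕ :=
  {x | ∃ U : Multiset ℕ, U ≤ S ∧ U ≠ 0 ∧ U.sum = x}

/-- `S` is 1-smooth: Σ(S) = [1, σ(S)]. -/
def OneSmooth (S : Multiset ℕ) : Prop :=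
  subSums S = Set.Icc 1 S.sum

/-- ⌈k/n⌉ for natural numbers (n ≥ 1). -/
def nCeil (k n : ℕ) : ℕ := (k + n - 1) / n

/-- No nonempty sub-multiset `S'` of `S` has `σ(S') ≥ ⌈k/n⌉·n` and `n ∣ σ(S')`. -/
def IdempotentSumFree (k n : ℕ) (S : Multiset ℕ) : Prop :=
  ∀ S' : Multiset ℕ, S' ≤ S → S' ≠ 0 → ¬(nCeil k n * n ≤ S'.sum ∧ n ∣ S'.sum)

/-- `S` is nonempty, `σ(S) ≥ ⌈k/n⌉·n` and `n ∣ σ(S)`, and no nonempty proper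
sub-multiset has both of these properties. -/
def MinimalIdempotentSum (k n : ℕ) (S : Multiset ℕ) : Prop :=
  S ≠ 0 ∧ (nCeil k n * n ≤ S.sum ∧ n ∣ S.sum) ∧
    ∀ S' : Multiset ℕ, S' < S → S' ≠ 0 → ¬(nCeil k n * n ≤ S'.sum ∧ n ∣ S'.sum)

/-- The set of sums of nonempty sub-multisets of `T` over `ZMod n`. -/
def subSumsZ {n : ℕ} (T : Multiset (ZMod n)) : Set (ZMod n) :=
  {x | ∃ U : Multiset (ZMod n), U ≤ T ∧ U ≠ 0 ∧ U.sum = x}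

/-- `T` is (zero-sum free) `g`-smooth: `T = {n₁·g, …, n_ℓ·g}` with
`1 = n₁ ≤ ⋯ ≤ n_ℓ`, `N := n₁ + ⋯ + n_ℓ < n` and `Σ(T) = {g, 2g, …, N·g}`. -/
def GSmooth {n : ℕ} (g : ZMod n) (T : Multiset (ZMod n)) : Prop :=
  ∃ c : Multiset ℕ, T = c.map (fun m => m • g) ∧ 1 ∈ c ∧ (∀ m ∈ c, 1 ≤ m) ∧
    c.sum < n ∧ subSumsZ T = {x | ∃ j : ℕ, 1 ≤ j ∧ j ≤ c.sum ∧ x = j • g}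

/-- `T` is zero-sum `g`-smooth: `T = {n₁·g, …, n_ℓ·g}` with
`1 = n₁ ≤ ⋯ ≤ n_ℓ`, `n₁ + ⋯ + n_ℓ = n` and `Σ(T) = {g, 2g, …, n·g}`. -/
def ZeroSumGSmooth {n : ℕ} (g : ZMod n) (T : Multiset (ZMod n)) : Prop :=
  ∃ c : Multiset ℕ, T = c.map (fun m => m • g) ∧ 1 ∈ c ∧ (∀ m ∈ c, 1 ≤ m) ∧
    c.sum = n ∧ subSumsZ T = {x | ∃ j : ℕ, 1 ≤ j ∧ j ≤ n ∧ x = j • g}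

/-- For a generator `g` of `ZMod n`, the unique `t ∈ [1,n]` with `t • g = a`. -/
noncomputable def normIdx (n : ℕ) (g a : ZMod n) : ℕ :=
  if (a * Ring.inverse g).val = 0 then n else (a * Ring.inverse g).val

/-- `‖T‖_g = (n₁ + ⋯ + n_ℓ)/n` where `T = {n₁·g, …, n_ℓ·g}` with `nᵢ ∈ [1,n]`. -/
noncomputable def normg (n : ℕ) (g : ZMod n) (T : Multiset (ZMod n)) : ℚ :=
  ((T.map (normIdx n g)).sum : ℚ) / n

/-- `ind(T) = 1`: the minimum of `‖T‖_g` over generators `g` equals `1`. -/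
def HasIndexOne (n : ℕ) (T : Multiset (ZMod n)) : Prop :=
  (∃ g : ZMod n, addOrderOf g = n ∧ normg n g T = 1) ∧
  ∀ g : ZMod n, addOrderOf g = n → (1 : ℚ) ≤ normg n g T

/-- The set of sums of all sub-multisets of `T`, including the empty one. -/
def allSums {n : ℕ} (T : Multiset (ZMod n)) : Finset (ZMod n) :=
  (T.powerset.map Multiset.sum).toFinset

theorem mem_allSums {n : ℕ} {T : Multiset (ZMod n)} {x : ZMod n} :
    x ∈ allSums T ↔ ∃ U ≤ T, U.sum = x := by
  simp [allSums]

theorem ZeroSumFree.mono {n : ℕ} {S T : Multiset (ZMod n)} (hT : ZeroSumFree T) (h : S ≤ T) :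
    ZeroSumFree S :=
  fun U hU => hT U (hU.trans h)

theorem card_allSums_cons {n : ℕ} (hn : 2 ≤ n) {a : ZMod n} {T : Multiset (ZMod n)}
    (h : ZeroSumFree (a ::ₘ T)) : (allSums T).card + 1 ≤ (allSums (a ::ₘ T)).card := by
  refine Finset.card_lt_card ⟨fun x hx => ?_, fun hsub => ?_⟩
  · obtain ⟨U, hU, rfl⟩ := mem_allSums.1 hx
    exact mem_allSums.2 ⟨U, hU.trans (Multiset.le_cons_self T a), rfl⟩
  · have key : ∀ k : ℕ, k • a ∈ allSums T := by
      intro k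
      induction k with
      | zero => exact mem_allSums.2 ⟨0, Multiset.zero_le _, by simp⟩
      | succ k ih =>
        obtain ⟨U, hU, hs⟩ := mem_allSums.1 ih
        refine hsub (mem_allSums.2 ⟨a ::ₘ U, Multiset.cons_le_cons a hU, ?_⟩)
        rw [Multiset.sum_cons, hs, succ_nsmul, add_comm]
    obtain ⟨U, hU, hs⟩ := mem_allSums.1 (key (n - 1))
    refine h (a ::ₘ U) (Multiset.cons_le_cons a hU) (Multiset.cons_ne_zero) ?_
    rw [Multiset.sum_cons, hs, ← succ_nsmul', Nat.sub_add_cancel (by omega)]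
    simp

theorem card_allSums_add_pair {n : ℕ} (hn : 2 ≤ n) {a b : ZMod n} (hab : a ≠ b)
    (R : Multiset (ZMod n)) (h : ZeroSumFree (R + {a, b})) :
    Multiset.card R + 4 ≤ (allSums (R + {a, b})).card := by
  induction R using Multiset.induction_on with
  | empty =>
    rw [zero_add] at h ⊢
    have ha : a ≠ 0 := by
      simpa using h {a} (by simp) (by simp)
    have hb : b ≠ 0 := by
      simpa using h {b} (by simp) (by simp)
    have hs : a + b ≠ 0 := by
      simpa using h {a, b} le_rfl (by simp)
    have hsub : ({0, a, b, a + b} : Finset (ZMod n)) ⊆ allSums {a, b} := by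
      intro x hx
      simp only [Finset.mem_insert, Finset.mem_singleton] at hx
      rw [mem_allSums]
      rcases hx with rfl | rfl | rfl | rfl
      · exact ⟨0, by simp, by simp⟩
      · exact ⟨{x}, by simp, by simp⟩
      · exact ⟨{x}, by simp, by simp⟩
      · exact ⟨{a, b}, le_rfl, by simp⟩
    have hcard : ({0, a, b, a + b} : Finset (ZMod n)).card = 4 := by
      rw [Finset.card_insert_of_notMem, Finset.card_insert_of_notMem,
        Finset.card_insert_of_notMem, Finset.card_singleton]
      · simpa using ha
      · simp [hab, hb]
      · simp [ha.symm, hb.symm, hs.symm]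
    simpa [hcard] using Finset.card_le_card hsub
  | cons c R ih =>
    rw [Multiset.cons_add] at h ⊢
    have h1 := ih (h.mono (Multiset.le_cons_self _ c))
    have h2 := card_allSums_cons hn h
    rw [Multiset.card_cons]
    omega

theorem zero_sum_free_of_length_n_sub_one (n : ℕ) (hn : 2 ≤ n)
    (T : Multiset (ZMod n)) (hT : ZeroSumFree T)
    (hlen : Multiset.card T = n - 1) :
    ∃ g : ZMod n, addOrderOf g = n ∧ T = Multiset.replicate (n - 1) g := by
  have : NeZero n := ⟨by omega⟩
  obtain ⟨g, hg⟩ := Multiset.card_pos_iff_exists_mem.1 (by omega : 0 < Multiset.card T)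
  have hrep : T = Multiset.replicate (n - 1) g := by
    refine Multiset.eq_replicate.2 ⟨hlen, fun b hb => ?_⟩
    by_contra hbg
    obtain ⟨T', rfl⟩ := Multiset.exists_cons_of_mem hg
    obtain ⟨R, rfl⟩ := Multiset.exists_cons_of_mem
      ((Multiset.mem_cons.1 hb).resolve_left hbg)
    have e : g ::ₘ b ::ₘ R = R + {g, b} := by
      rw [add_comm, Multiset.insert_eq_cons, Multiset.cons_add, Multiset.singleton_add]
    rw [e] at hT
    have h1 := card_allSums_add_pair hn (Ne.symm hbg) R hT
    have h2 := Finset.card_le_univ (allSums (R + {g, b}))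
    rw [ZMod.card] at h2
    simp only [Multiset.card_cons] at hlen
    omega
  refine ⟨g, ?_, hrep⟩
  have hle : addOrderOf g ≤ n := by
    simpa [ZMod.card] using addOrderOf_le_card_univ (x := g)
  have hpos : 0 < addOrderOf g := addOrderOf_pos g
  by_contra hne
  refine hT (Multiset.replicate (addOrderOf g) g) ?_ ?_ ?_
  · rw [hrep]
    exact Multiset.replicate_le_replicate g |>.2 (by omega)
  · intro h0
    have := congrArg Multiset.card h0
    simp only [Multiset.card_replicate, Multiset.card_zero] at this
    omega
  · rw [Multiset.sum_replicate, addOrderOf_nsmul_eq_zero]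
end

section
/- Let n ≥ 2 and let T be a finite multiset over the cyclic group ZMod n that is a minimal zero-sum sequence of length |T| = n. Then there exists g ∈ ZMod n of additive order n such that T consists of the element g repeated n times. -/
/-!
Order the elements of `T` in a list of length `n`. By minimality the sums of its prefixes of
lengths `0, …, n - 1` are pairwise distinct (the difference of two of them is the sum of a nonempty
proper block), so they exhaust `ZMod n` (`exists_take_sum_eq`). If `T` had two distinct elements
`g` and `b`, put them first in the list: then `b` is itself the sum of a prefix of length `k < n`.
Here `k ≠ 0` since `b ≠ 0`, and `k ≠ 1` since `b ≠ g`, so the prefix contains both `g` and `b`;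
cancelling `b` gives a nonempty proper zero-sum sub-multiset, a contradiction. Hence `T` is constant,
and minimality says exactly that its element has order `n`.
-/

open Multiset

/-- Minimality in terms of cardinality, which is how proper sub-multisets are recognized below. -/
lemma MinimalZeroSum.sum_ne_zero {n : ℕ} {T U : Multiset (ZMod n)} (hT : MinimalZeroSum T)
    (hU : U ≤ T) (h0 : 0 < Multiset.card U) (h1 : Multiset.card U < Multiset.card T) :
    U.sum ≠ 0 := by
  refine hT.2.2 U (lt_of_le_of_ne hU ?_) (Multiset.card_pos.mp h0)
  rintro rfl
  exact lt_irrefl _ h1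

/-- Every element of `ZMod n` is the sum of a prefix of length less than `n`: the `n` prefix sums
are distinct, so injectivity gives surjectivity. -/
lemma exists_take_sum_eq {n : ℕ} [NeZero n] {l : List (ZMod n)}
    (hT : MinimalZeroSum (l : Multiset (ZMod n))) (hl : l.length = n) (x : ZMod n) :
    ∃ k < n, (l.take k).sum = x := by
  have hlt : ∀ i j : ℕ, i < j → j < n → (l.take i).sum ≠ (l.take j).sum := by
    intro i j hij hj h
    have hsplit : (l.take j).sum = (l.take i).sum + ((l.take j).drop i).sum := by
      rw [← List.sum_take_add_sum_drop (l.take j) i, List.take_take, min_eq_left hij.le]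
    have hzero : ((l.take j).drop i).sum = 0 := by
      rw [← h] at hsplit
      simpa using hsplit
    refine hT.sum_ne_zero (U := ((l.take j).drop i : List (ZMod n))) ?_ ?_ ?_ (by simpa using hzero)
    · exact Multiset.coe_le.mpr ((List.drop_sublist _ _).trans (List.take_sublist _ _)).subperm
    · simp only [Multiset.coe_card, List.length_drop, List.length_take]
      omega
    · simp only [Multiset.coe_card, List.length_drop, List.length_take]
      omega
  have hinj : Function.Injective (fun k : Fin n => (l.take k).sum) := by
    intro i j h
    rcases lt_trichotomy i j with hij | hij | hij
    · exact absurd h (hlt i j hij j.2)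
    · exact hij
    · exact absurd h.symm (hlt j i hij i.2)
  have hbij := (Fintype.bijective_iff_injective_and_card _).mpr ⟨hinj, by simp [ZMod.card]⟩
  obtain ⟨k, hk⟩ := hbij.2 x
  exact ⟨k, k.2, hk⟩

theorem minimal_zero_sum_of_length_n (n : ℕ) (hn : 2 ≤ n)
    (T : Multiset (ZMod n)) (hT : MinimalZeroSum T)
    (hlen : Multiset.card T = n) :
    ∃ g : ZMod n, addOrderOf g = n ∧ T = Multiset.replicate n g := by
  have : NeZero n := ⟨by omega⟩
  obtain ⟨g, hg⟩ := Multiset.exists_mem_of_ne_zero hT.1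
  have hrep : T = Multiset.replicate n g := by
    refine Multiset.eq_replicate.mpr ⟨hlen, fun b hb => ?_⟩
    by_contra hbg
    obtain ⟨S, rfl⟩ := Multiset.exists_cons_of_mem hg
    obtain ⟨R, rfl⟩ := Multiset.exists_cons_of_mem
      ((Multiset.mem_cons.mp hb).resolve_left hbg)
    induction R using Quotient.inductionOn with | _ l => ?_
    have hlen' : (g :: b :: l).length = n := by simpa using hlen
    have hT' : MinimalZeroSum ((g :: b :: l : List (ZMod n)) : Multiset (ZMod n)) := by
      simpa using hT
    obtain ⟨k, hk, hsum⟩ := exists_take_sum_eq hT' hlen' b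
    match k, hk, hsum with
    | 0, _, hsum =>
      refine hT'.sum_ne_zero (U := {b}) ?_ (by simp) (by simp) ?_
      · simp
      · simpa using hsum.symm
    | 1, _, hsum => exact hbg (by simpa using hsum.symm)
    | k + 2, hk, hsum =>
      refine hT'.sum_ne_zero (U := (g :: l.take k : List (ZMod n))) ?_ (by simp) ?_ ?_
      · exact Multiset.coe_le.mpr
          (((List.take_sublist k l).trans (List.sublist_cons_self b l)).cons_cons g).subperm
      · simp
      · simp only [List.take_succ_cons, List.sum_cons] at hsum
        simp only [Multiset.sum_coe, List.sum_cons]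
        linear_combination hsum
  refine ⟨g, ?_, hrep⟩
  subst hrep
  refine (addOrderOf_eq_iff (by omega)).mpr ⟨by simp, fun m hm hm0 => ?_⟩
  have := hT.sum_ne_zero (U := Multiset.replicate m g)
    ((Multiset.replicate_le_replicate g).mpr hm.le) (by simpa using hm0) (by simpa using hm)
  simpa using this
end

section
/- Let n ≥ 2 and let T be a finite multiset over ZMod n all of whose elements are nonzero, with |T| ≥ n − 1. Let U be a sub-multiset of T with sum 0 (the empty sub-multiset is allowed, with sum 0) such that |U| is maximal among all sub-multisets of T with sum 0. If |T| − |U| = n − 1, then there exists g ∈ ZMod n of additive order n such that T consists of the element g repeated |T| times. -/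
/-!
Let `R = T - U`. Maximality of `U` makes `R` zero-sum free, since a zero-sum part of `R` could be
added to `U`. A zero-sum free sequence of length `n - 1` is constant (`ZeroSumFree.all_eq`): if
`a` and `b` are two of its terms, the `n` partial sums of an ordering `a, b, x₃, …` are distinct,
so they exhaust `ZMod n`; but `b` can be the partial sum `a + b + x₃ + ⋯ + x_i` only if
`a + x₃ + ⋯ + x_i = 0`, hence `b = a`. So `R` is `n - 1` copies of some `g`, which has order `n`.
Finally, an element of `U` has the form `k • g` with `1 ≤ k ≤ n - 1`; trading it for `k` copies
of `g` from `R` gives another zero-sum part of `T`, and maximality forces `k = 1`.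
-/

open Multiset

/-- The partial sums of any ordering of a zero-sum free multiset are pairwise distinct. -/
lemma ZeroSumFree.take_sum_ne {n : ℕ} {l : List (ZMod n)}
    (hl : ZeroSumFree (l : Multiset (ZMod n))) {i j : ℕ} (hij : i < j) (hj : j ≤ l.length) :
    (l.take i).sum ≠ (l.take j).sum := by
  intro heq
  have hsplit : (l.take j).sum = (l.take i).sum + ((l.take j).drop i).sum := by
    conv_lhs => rw [← List.take_append_drop i (l.take j)]
    rw [List.sum_append, List.take_take, min_eq_left hij.le]
  have hsub : ((l.take j).drop i).Sublist l :=
    (List.drop_sublist i _).trans (List.take_sublist j l)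
  refine hl (((l.take j).drop i : List (ZMod n)) : Multiset (ZMod n))
    (Multiset.coe_le.mpr hsub.subperm) ?_ ?_
  · intro h0
    have hlen := congrArg Multiset.card h0
    simp only [Multiset.coe_card, List.length_drop, List.length_take, Multiset.card_zero] at hlen
    omega
  · rw [Multiset.sum_coe]
    rw [hsplit] at heq
    exact left_eq_add.mp heq

lemma ZeroSumFree.all_eq {n : ℕ} (hn : 2 ≤ n) {R : Multiset (ZMod n)} (hR : ZeroSumFree R)
    (hcard : Multiset.card R = n - 1) {a b : ZMod n} (ha : a ∈ R) (hb : b ∈ R) : b = a := by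
  by_contra hne
  have : NeZero n := ⟨by omega⟩
  obtain ⟨R₁, rfl⟩ := Multiset.exists_cons_of_mem ha
  obtain ⟨R₂, rfl⟩ := Multiset.exists_cons_of_mem ((Multiset.mem_cons.mp hb).resolve_left hne)
  induction R₂ using Quotient.inductionOn with
  | h l =>
  change ZeroSumFree ((a :: b :: l : List (ZMod n)) : Multiset (ZMod n)) at hR
  have hlen : (a :: b :: l).length = n - 1 := hcard
  have hinj : Function.Injective (fun i : Fin n => ((a :: b :: l).take i).sum) := by
    intro i j hij
    rcases lt_trichotomy i j with h | h | h
    · exact absurd hij (hR.take_sum_ne h (by omega))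
    · exact h
    · exact absurd hij.symm (hR.take_sum_ne h (by omega))
  have hbij := (Fintype.bijective_iff_injective_and_card _).mpr ⟨hinj, by simp [ZMod.card]⟩
  obtain ⟨⟨i, hi⟩, hib⟩ := hbij.surjective b
  match i, hi, hib with
  | 0, _, hib =>
    have hb0 : b = 0 := by simpa using hib.symm
    exact hR {b} (Multiset.singleton_le.mpr hb) (by simp) (by simpa using hb0)
  | 1, _, hib => exact hne (by simpa using hib.symm)
  | k + 2, _, hib =>
    -- `b = a + b + s` with `s` a partial sum of `l`, so the subsequence with sum `a + s` vanishes
    have hsub : (a :: l.take k).Sublist (a :: b :: l) :=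
      ((List.take_sublist k l).trans (List.sublist_cons_self b l)).cons_cons a
    refine hR ((a :: l.take k : List (ZMod n)) : Multiset (ZMod n))
      (Multiset.coe_le.mpr hsub.subperm) (by simp) ?_
    simp only [List.take_succ_cons, List.sum_cons] at hib
    simp only [Multiset.sum_coe, List.sum_cons]
    linear_combination hib

theorem decomposition_lemma (n : ℕ) (hn : 2 ≤ n)
    (T : Multiset (ZMod n)) (hT : ∀ a ∈ T, a ≠ 0)
    (hlen : n - 1 ≤ Multiset.card T)
    (U : Multiset (ZMod n)) (hUT : U ≤ T) (hUsum : U.sum = 0)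
    (hUmax : ∀ V : Multiset (ZMod n), V ≤ T → V.sum = 0 →
      Multiset.card V ≤ Multiset.card U)
    (h : Multiset.card T - Multiset.card U = n - 1) :
    ∃ g : ZMod n, addOrderOf g = n ∧ T = Multiset.replicate (Multiset.card T) g := by
  have : NeZero n := ⟨by omega⟩
  obtain ⟨R, rfl⟩ := Multiset.le_iff_exists_add.mp hUT
  have hRcard : Multiset.card R = n - 1 := by
    rw [Multiset.card_add] at h
    omega
  have hRfree : ZeroSumFree R := by
    intro V hV hV0 hVsum
    have hle := hUmax (U + V) (by gcongr) (by rw [Multiset.sum_add, hUsum, hVsum, add_zero])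
    rw [Multiset.card_add] at hle
    have hpos := Multiset.card_pos.mpr hV0
    omega
  obtain ⟨g, hg⟩ := Multiset.card_pos_iff_exists_mem.mp (show 0 < Multiset.card R by omega)
  have hRrep : R = Multiset.replicate (n - 1) g :=
    Multiset.eq_replicate.mpr ⟨hRcard, fun b hb => hRfree.all_eq hn hRcard hg hb⟩
  have hord : addOrderOf g = n := by
    refine le_antisymm ?_ ?_
    · simpa [ZMod.card] using addOrderOf_le_card_univ (x := g)
    · by_contra! hlt
      have hpos := addOrderOf_pos g
      refine hRfree (Multiset.replicate (addOrderOf g) g) ?_ ?_ ?_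
      · rw [hRrep]
        exact (Multiset.replicate_le_replicate g).mpr (by omega)
      · exact Multiset.card_pos.mp (by simpa using hpos)
      · rw [Multiset.sum_replicate, addOrderOf_nsmul_eq_zero]
  refine ⟨g, hord, Multiset.eq_replicate.mpr ⟨rfl, fun a ha => ?_⟩⟩
  rcases Multiset.mem_add.mp ha with haU | haR
  · have hmem : a ∈ AddSubgroup.zmultiples g := by
      have htop : AddSubgroup.zmultiples g = ⊤ :=
        AddSubgroup.eq_top_of_card_eq _ (by
          rw [Nat.card_zmultiples, hord, Nat.card_zmod])
      rw [htop]
      trivial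
    rw [mem_zmultiples_iff_mem_range_addOrderOf] at hmem
    obtain ⟨k, hk, rfl⟩ := Finset.mem_image.mp hmem
    rw [Finset.mem_range, hord] at hk
    have hk0 : k ≠ 0 := by
      rintro rfl
      exact hT _ ha (zero_nsmul g)
    obtain ⟨U₁, rfl⟩ := Multiset.exists_cons_of_mem haU
    have hle := hUmax (U₁ + Multiset.replicate k g) ?_ ?_
    · rw [Multiset.card_add, Multiset.card_replicate, Multiset.card_cons] at hle
      obtain rfl : k = 1 := by omega
      exact one_nsmul g
    · rw [hRrep]
      exact add_le_add (Multiset.le_cons_self _ _)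
        ((Multiset.replicate_le_replicate g).mpr (by omega))
    · rw [Multiset.sum_add, Multiset.sum_replicate, add_comm, ← Multiset.sum_cons, hUsum]
  · exact hRfree.all_eq hn hRcard hg haR
end

section
/- Let ℓ ≥ 1 and let T be a finite multiset of positive integers with |T| = ℓ that is not 1-smooth. Then σ(T) = 2ℓ holds if and only if either T consists of ℓ − 1 copies of 1 together with one copy of ℓ + 1, or T consists of ℓ copies of 2. -/
/-!
Grow a sub-multiset `A` of `T` whose subset sums are all of `0, 1, …, σ(A)`, starting from the empty one: an element `b ≤ σ(A) + 1` of the rest can always be added to `A`. When this stops,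
`T = A + B` with every element of `B` at least `σ(A) + 2` (`exists_complete_part`).

As `T` is not 1-smooth, `B` is nonempty. With `s = σ(A) ≥ a = |A|` and `m = |B| ≥ 1`, the equation
`σ(T) = 2(a + m)` and `σ(B) ≥ m(s + 2)` give `s + m s ≤ 2a ≤ 2s`, so `m = 1` or `s = 0`. If `m = 1`
then `s = a`, so `A` consists of ones and `B = {a + 2}`; if `s = 0` then `A` is empty and `B` consists
of twos, since its elements are at least `2` and their mean is `2`.
-/

open Multiset

/-- Every value from `0` to `σ(A)` is a subset sum of `A` (the empty sum being allowed). -/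
def Complete (A : Multiset ℕ) : Prop :=
  ∀ j ≤ A.sum, ∃ U ≤ A, U.sum = j

lemma Complete.cons {A : Multiset ℕ} (hA : Complete A) {b : ℕ} (hb : b ≤ A.sum + 1) :
    Complete (b ::ₘ A) := by
  intro j hj
  rw [Multiset.sum_cons] at hj
  by_cases h : j ≤ A.sum
  · obtain ⟨U, hU, rfl⟩ := hA j h
    exact ⟨U, hU.trans (Multiset.le_cons_self A b), rfl⟩
  · obtain ⟨U, hU, hs⟩ := hA (j - b) (by omega)
    refine ⟨b ::ₘ U, Multiset.cons_le_cons b hU, ?_⟩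
    rw [Multiset.sum_cons]
    omega

/-- Elements of `B` can be moved to the complete part `A` until every remaining one is at least
`σ(A) + 2`; the induction is on the size of `B`. -/
lemma exists_complete_part (n : ℕ) : ∀ A B : Multiset ℕ, B.card = n → Complete A →
    ∃ A' B', A' + B' = A + B ∧ Complete A' ∧ ∀ b ∈ B', A'.sum + 2 ≤ b := by
  induction n with
  | zero =>
    intro A B hB hA
    rw [Multiset.card_eq_zero] at hB
    subst hB
    exact ⟨A, 0, rfl, hA, by simp⟩
  | succ n ih =>
    intro A B hB hA
    by_cases h : ∀ b ∈ B, A.sum + 2 ≤ b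
    · exact ⟨A, B, rfl, hA, h⟩
    · push Not at h
      obtain ⟨b, hb, hlt⟩ := h
      obtain ⟨C, rfl⟩ := Multiset.exists_cons_of_mem hb
      obtain ⟨A', B', he, h'⟩ := ih (b ::ₘ A) C (by simpa using hB) (hA.cons (by omega))
      exact ⟨A', B', by rw [he]; simp, h'⟩

lemma Complete.oneSmooth {T : Multiset ℕ} (hT : Complete T) (hpos : ∀ x ∈ T, 0 < x) :
    OneSmooth T := by
  ext j
  simp only [subSums, Set.mem_ofPred_eq, Set.mem_Icc]
  constructor
  · rintro ⟨U, hU, hne, rfl⟩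
    obtain ⟨x, hx⟩ := Multiset.exists_mem_of_ne_zero hne
    have h1 := hpos x (Multiset.mem_of_le hU hx)
    have h2 := Multiset.le_sum_of_mem hx
    obtain ⟨V, rfl⟩ := Multiset.le_iff_exists_add.mp hU
    rw [Multiset.sum_add]
    omega
  · rintro ⟨h1, h2⟩
    obtain ⟨U, hU, rfl⟩ := hT j h2
    refine ⟨U, hU, ?_, rfl⟩
    rintro rfl
    simp at h1

lemma card_mul_le_sum {A : Multiset ℕ} {c : ℕ} (h : ∀ x ∈ A, c ≤ x) : A.card * c ≤ A.sum := by
  simpa using Multiset.card_nsmul_le_sum h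

lemma eq_replicate_of_sum_le {c : ℕ} {A : Multiset ℕ} (h : ∀ x ∈ A, c ≤ x)
    (hs : A.sum ≤ A.card * c) : A = Multiset.replicate A.card c := by
  refine Multiset.eq_replicate_card.mpr fun b hb => ?_
  obtain ⟨C, rfl⟩ := Multiset.exists_cons_of_mem hb
  have h1 := h b hb
  have h2 := card_mul_le_sum (A := C) fun x hx => h x (Multiset.mem_cons_of_mem hx)
  simp only [Multiset.sum_cons, Multiset.card_cons, add_mul, one_mul] at hs
  omega

theorem sum_eq_two_mul_length_iff (ℓ : ℕ) (hℓ : 1 ≤ ℓ)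
    (T : Multiset ℕ) (hpos : ∀ x ∈ T, 0 < x) (hcard : Multiset.card T = ℓ)
    (h : ¬ OneSmooth T) :
    T.sum = 2 * ℓ ↔
      T = Multiset.replicate (ℓ - 1) 1 + {ℓ + 1} ∨ T = Multiset.replicate ℓ 2 := by
  constructor
  · intro hsum
    obtain ⟨A, B, hAB, hA, hB⟩ := exists_complete_part T.card 0 T rfl
      (fun j hj => ⟨0, le_rfl, by simp at hj; simp [hj]⟩)
    rw [zero_add] at hAB
    subst hAB
    have hB0 : B ≠ 0 := by
      rintro rfl
      rw [add_zero] at h hpos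
      exact h (hA.oneSmooth hpos)
    have hm : 0 < B.card := Multiset.card_pos.mpr hB0
    have hA1 : ∀ x ∈ A, 1 ≤ x := fun x hx => hpos x (Multiset.mem_add.mpr (Or.inl hx))
    have hsA := card_mul_le_sum hA1
    have hsB := card_mul_le_sum hB
    rw [Multiset.card_add] at hcard
    rw [Multiset.sum_add] at hsum
    rcases (show B.card = 1 ∨ 2 ≤ B.card by omega) with h1 | h2
    · left
      obtain ⟨b, rfl⟩ := Multiset.card_eq_one.mp h1
      simp only [Multiset.card_singleton, Multiset.sum_singleton] at *
      have hAr := eq_replicate_of_sum_le hA1 (by omega)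
      have e1 : ℓ - 1 = A.card := by omega
      have e2 : ℓ + 1 = b := by omega
      rw [e1, e2, ← hAr]
    · right
      have hs : A.sum = 0 := by nlinarith
      have hA0 : A = 0 := Multiset.card_eq_zero.mp (by omega)
      subst hA0
      simp only [Multiset.sum_zero, Multiset.card_zero, zero_add] at *
      rw [← hcard]
      exact eq_replicate_of_sum_le hB (by omega)
  · rintro (rfl | rfl)
    · simp
      omega
    · simp [mul_comm]
end

section
/- Let k > n ≥ 1 be integers and let S be a finite multiset of integers from the interval [1, k+n−1] with 2·|S| ≥ (⌈k/n⌉+1)·n − 2. Then S is idempotent-sum free if and only if one of the following holds: (i) S is 1-smooth and σ(S) ≤ ⌈k/n⌉·n − 1; (ii) n ≥ 3, ⌈k/n⌉·n is odd, and S consists of (⌈k/n⌉+1)·n/2 − 1 copies of 2; (iii) n = 2 and S consists of ⌈k/2⌉ − 1 copies of 2 together with one copy of an odd integer z ≥ 3; (iv) n = 1, k is odd, and S consists of (k−3)/2 copies of 1 together with one copy of (k+1)/2; (v) n = 1, k is odd, and S consists of (k−1)/2 copies of 2. -/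
/-!
Write `N = ⌈k/n⌉ * n` and `ℓ = |S|`, so that `N + n - 2 ≤ 2ℓ`. Call a multiset *full* if its
subset sums (the empty one included) fill `[0, σ]`.

*Two tools.* A multiset of positive integers with `σ < 2|·|` is full, and one with `σ = 2|·|` is
full, constantly `2`, or of the form `1, …, 1, t + 1` with `t` terms (`full_of_sum_lt`,
`full_or_of_sum_eq`). Secondly, if `S` is idempotent-sum free and some full `U ≤ S` has
`σ(U) ≥ n - 1`, then `σ(S) < N`: otherwise removing from `S` a part of `U` with sum `σ(S) mod n`
leaves a multiple of `n` that is at least `N` (`sum_lt_of_full`).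

*If `σ(S) < N`*, then `σ(S) ≤ 2ℓ - n + 1`, and the first tool gives (i), (iv) or (v).

*If `σ(S) ≥ N`*, then `n ≥ 2`, and every `T ≤ S` with `n ∣ σ(T)` satisfies
`2|T| ≤ σ(T) ≤ N - n`, since otherwise `T` would be full with sum at least `n`. Take such a `T` of
maximal cardinality. The complement `R = S - T` is zero-sum free modulo `n`, so `|R| ≤ n - 1`, and
comparing lengths forces `|R| = n - 1` and `2|T| = σ(T) = N - n`. A zero-sum free multiset of
length `n - 1` is constant modulo `n` and its subset sums represent every residue. Hence a term `x`
of `T` with `x ≢ 0` is congruent to the terms of `R`: otherwise replacing `x` by at least two terms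
of `R` would enlarge `T`. Moreover `x` is at least as large as these terms, since exchanging `x` for a larger
congruent term would push the sum above `N - n` (`eq_or_of_large_sum`). As `T` is not full, it is
constantly `2`, leading to (ii) or (iii), or of the form `1, …, 1, t + 1`, in which case `R`
consists of `n - 1` ones, which is full, a contradiction.
-/

open Multiset

/-- The subset sums of `U`, the empty one included, are exactly `0, 1, …, σ(U)`. -/
def Full (U : Multiset ℕ) : Prop := ∀ j ≤ U.sum, ∃ W ≤ U, W.sum = j

/-- No nonempty sub-multiset of `R` has a sum divisible by `n`. -/
def ZFree (n : ℕ) (R : Multiset ℕ) : Prop := ∀ U ≤ R, U ≠ 0 → ¬ n ∣ U.sum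

/-- The residues modulo `n` of the sums of sub-multisets of `R`, the empty one included. -/
def residues (n : ℕ) (R : Multiset ℕ) : Finset (ZMod n) :=
  (R.powerset.map (fun U => (U.sum : ZMod n))).toFinset

lemma mem_residues {n : ℕ} {R : Multiset ℕ} {y : ZMod n} :
    y ∈ residues n R ↔ ∃ U ≤ R, (U.sum : ZMod n) = y := by
  simp [residues]

/-! ### Multisets of small sum -/

lemma card_le_sum_of_pos {S : Multiset ℕ} (h : ∀ x ∈ S, 1 ≤ x) : S.card ≤ S.sum := by
  simpa using Multiset.card_nsmul_le_sum h

lemma sum_le_sum_of_le {U S : Multiset ℕ} (h : U ≤ S) : U.sum ≤ S.sum := by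
  obtain ⟨V, rfl⟩ := Multiset.le_iff_exists_add.mp h
  simp

lemma full_cons {x : ℕ} {S : Multiset ℕ} (hS : Full S) (hx : x ≤ S.sum + 1) :
    Full (x ::ₘ S) := by
  intro j hj
  rw [Multiset.sum_cons] at hj
  by_cases h : j ≤ S.sum
  · obtain ⟨W, hW, hs⟩ := hS j h
    exact ⟨W, hW.trans (Multiset.le_cons_self _ _), hs⟩
  · obtain ⟨W, hW, hs⟩ := hS (j - x) (by omega)
    refine ⟨x ::ₘ W, Multiset.cons_le_cons _ hW, ?_⟩
    rw [Multiset.sum_cons]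
    omega

lemma full_replicate_one (a : ℕ) : Full (Multiset.replicate a 1) := by
  intro j hj
  exact ⟨Multiset.replicate j 1, by
    rw [Multiset.replicate_le_replicate]; simpa using hj, by simp⟩

/-- The truncated bound `σ ≤ 2|S| - 1` includes the empty multiset. -/
lemma full_of_sum_lt (S : Multiset ℕ) (hpos : ∀ x ∈ S, 1 ≤ x)
    (hs : S.sum ≤ 2 * S.card - 1) : Full S := by
  induction hc : S.card generalizing S with
  | zero =>
    rw [Multiset.card_eq_zero] at hc
    subst hc
    exact full_replicate_one 0
  | succ c ih =>
    by_cases h : ∃ x ∈ S, 2 ≤ x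
    · obtain ⟨x, hx, hx2⟩ := h
      obtain ⟨S', rfl⟩ := Multiset.exists_cons_of_mem hx
      have hpos' : ∀ x ∈ S', 1 ≤ x := fun y hy => hpos y (Multiset.mem_cons_of_mem hy)
      have hle := card_le_sum_of_pos hpos'
      rw [Multiset.card_cons] at hc
      rw [Multiset.card_cons, Multiset.sum_cons] at hs
      exact full_cons (ih S' hpos' (by omega) (by omega)) (by omega)
    · push Not at h
      have hones : S = Multiset.replicate S.card 1 := Multiset.eq_replicate_card.mpr
        fun x hx => by have := h x hx; have := hpos x hx; omega
      rw [hones]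
      exact full_replicate_one _

lemma full_or_of_sum_eq (S : Multiset ℕ) (hpos : ∀ x ∈ S, 1 ≤ x)
    (hs : S.sum = 2 * S.card) :
    Full S ∨ S = Multiset.replicate S.card 2 ∨
      (2 ≤ S.card ∧ S = (S.card + 1) ::ₘ Multiset.replicate (S.card - 1) 1) := by
  by_cases h : ∃ x ∈ S, 3 ≤ x
  · obtain ⟨x, hx, hx3⟩ := h
    obtain ⟨S', rfl⟩ := Multiset.exists_cons_of_mem hx
    have hpos' : ∀ x ∈ S', 1 ≤ x := fun y hy => hpos y (Multiset.mem_cons_of_mem hy)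
    have hle := card_le_sum_of_pos hpos'
    rw [Multiset.card_cons, Multiset.sum_cons] at hs
    by_cases hx' : x ≤ S'.sum + 1
    · exact Or.inl (full_cons (full_of_sum_lt S' hpos' (by omega)) hx')
    · -- The bounds `|S'| ≤ σ(S')` and `x ≥ σ(S') + 2` force `σ(S') = |S'|`: only ones remain.
      right; right
      have hones : S' = Multiset.replicate S'.card 1 := by
        rw [Multiset.eq_replicate_card]
        intro y hy
        obtain ⟨S'', rfl⟩ := Multiset.exists_cons_of_mem hy
        have h2 : S''.card ≤ S''.sum :=
          card_le_sum_of_pos fun z hz => hpos' z (Multiset.mem_cons_of_mem hz)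
        have h3 := hpos' y hy
        rw [Multiset.card_cons, Multiset.sum_cons] at *
        omega
      have hxe : x = S'.card + 1 + 1 := by omega
      rw [Multiset.card_cons]
      refine ⟨by omega, ?_⟩
      rw [Nat.add_sub_cancel, ← hones, ← hxe]
  · right; left
    push Not at h
    rw [Multiset.eq_replicate_card]
    intro y hy
    obtain ⟨S', rfl⟩ := Multiset.exists_cons_of_mem hy
    have h2 : S'.sum ≤ S'.card * 2 := by
      simpa using Multiset.sum_le_card_nsmul S' 2
        fun z hz => by have := h z (Multiset.mem_cons_of_mem hz); omega
    have h3 := h y hy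
    rw [Multiset.card_cons, Multiset.sum_cons] at hs
    omega

lemma oneSmooth_of_full {S : Multiset ℕ} (hpos : ∀ x ∈ S, 1 ≤ x) (h : Full S) :
    OneSmooth S := by
  ext j
  constructor
  · rintro ⟨U, hU, hU0, rfl⟩
    have h1 := card_le_sum_of_pos fun x hx => hpos x (Multiset.mem_of_le hU hx)
    have h2 := Multiset.card_pos.mpr hU0
    exact ⟨by omega, sum_le_sum_of_le hU⟩
  · rintro ⟨h1, h2⟩
    obtain ⟨W, hW, rfl⟩ := h j h2
    refine ⟨W, hW, ?_, rfl⟩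
    rintro rfl
    simp at h1

/-! ### Zero-sum free multisets modulo `n` -/

lemma ZFree.mono {n : ℕ} {R R' : Multiset ℕ} (h : ZFree n R) (hle : R' ≤ R) : ZFree n R' :=
  fun U hU => h U (hU.trans hle)

/-- A zero-sum free multiset gains a new subset sum with each term: otherwise the set of residues
would be stable under adding `x`, hence contain `-x`. -/
lemma card_residues_cons {n : ℕ} (hn : 1 ≤ n) {x : ℕ} {R : Multiset ℕ}
    (h : ZFree n (x ::ₘ R)) : (residues n R).card + 1 ≤ (residues n (x ::ₘ R)).card := by
  apply Finset.card_lt_card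
  have hsub : residues n R ⊆ residues n (x ::ₘ R) := by
    intro y hy
    obtain ⟨U, hU, rfl⟩ := mem_residues.mp hy
    exact mem_residues.mpr ⟨U, hU.trans (Multiset.le_cons_self _ _), rfl⟩
  refine Finset.ssubset_iff_subset_ne.mpr ⟨hsub, fun heq => ?_⟩
  have hstep : ∀ y ∈ residues n R, (x : ZMod n) + y ∈ residues n R := by
    intro y hy
    obtain ⟨U, hU, rfl⟩ := mem_residues.mp hy
    rw [heq]
    exact mem_residues.mpr ⟨x ::ₘ U, Multiset.cons_le_cons _ hU, by simp⟩
  have hall : ∀ j : ℕ, ((j * x : ℕ) : ZMod n) ∈ residues n R := by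
    intro j
    induction j with
    | zero => exact mem_residues.mpr ⟨0, Multiset.zero_le _, by simp⟩
    | succ j ih =>
      have := hstep _ ih
      convert this using 1
      push_cast
      ring
  obtain ⟨U, hU, hs⟩ := mem_residues.mp (hall (n - 1))
  apply h (x ::ₘ U) (Multiset.cons_le_cons _ hU) (Multiset.cons_ne_zero)
  rw [← ZMod.natCast_eq_zero_iff, Multiset.sum_cons, Nat.cast_add, hs, ← Nat.cast_add,
    ZMod.natCast_eq_zero_iff]
  obtain ⟨n, rfl⟩ := Nat.exists_eq_add_of_le hn
  refine ⟨x, ?_⟩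
  simp
  ring

lemma card_residues_add {n : ℕ} (hn : 1 ≤ n) (R₀ R : Multiset ℕ) (h : ZFree n (R + R₀)) :
    (residues n R₀).card + R.card ≤ (residues n (R + R₀)).card := by
  induction R using Multiset.induction_on with
  | empty => simp
  | cons x R ih =>
    rw [Multiset.cons_add] at h ⊢
    have h1 := ih (h.mono (Multiset.le_cons_self _ _))
    have h2 := card_residues_cons hn h
    rw [Multiset.card_cons]
    omega

lemma ZFree.card_lt_card_residues {n : ℕ} (hn : 1 ≤ n) {R : Multiset ℕ} (h : ZFree n R) :
    R.card + 1 ≤ (residues n R).card := by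
  have h1 := card_residues_add hn 0 R (by simpa using h)
  have h2 : 0 < (residues n 0).card :=
    Finset.card_pos.mpr ⟨0, mem_residues.mpr ⟨0, le_rfl, by simp⟩⟩
  rw [add_zero] at h1
  omega

lemma card_residues_le {n : ℕ} (hn : 1 ≤ n) (R : Multiset ℕ) : (residues n R).card ≤ n := by
  have : NeZero n := ⟨by omega⟩
  simpa [ZMod.card] using Finset.card_le_univ (residues n R)

lemma ZFree.card_lt {n : ℕ} (hn : 1 ≤ n) {R : Multiset ℕ} (h : ZFree n R) :
    R.card + 1 ≤ n :=
  (h.card_lt_card_residues hn).trans (card_residues_le hn R)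

lemma ZFree.exists_sum_eq {n : ℕ} (hn : 1 ≤ n) {R : Multiset ℕ} (h : ZFree n R)
    (hc : R.card + 1 = n) (y : ZMod n) : ∃ U ≤ R, (U.sum : ZMod n) = y := by
  have : NeZero n := ⟨by omega⟩
  have h1 := h.card_lt_card_residues hn
  have : residues n R = Finset.univ := by
    rw [← Finset.card_eq_iff_eq_univ, ZMod.card]
    exact le_antisymm (card_residues_le hn R) (by omega)
  rw [← mem_residues, this]
  exact Finset.mem_univ _

/-- Two incongruent terms `a`, `b` already have the four subset sums `0, a, b, a + b`, one more
than the general count allows in the extremal case. -/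
lemma ZFree.congr_of_card {n : ℕ} (hn : 1 ≤ n) {R : Multiset ℕ} (h : ZFree n R)
    (hc : R.card + 1 = n) {a b : ℕ} (ha : a ∈ R) (hb : b ∈ R) :
    (a : ZMod n) = (b : ZMod n) := by
  by_contra hab
  obtain ⟨R₁, rfl⟩ := Multiset.exists_cons_of_mem ha
  have hb' : b ∈ R₁ := by
    rcases Multiset.mem_cons.mp hb with rfl | h'
    · exact absurd rfl hab
    · exact h'
  obtain ⟨R₂, rfl⟩ := Multiset.exists_cons_of_mem hb'
  have heq : a ::ₘ b ::ₘ R₂ = R₂ + {a, b} := by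
    rw [add_comm]; simp [Multiset.insert_eq_cons]
  rw [heq] at h hc
  have h1 := card_residues_add hn {a, b} R₂ h
  have h2 := card_residues_le hn (R₂ + {a, b})
  have hle : ({a, b} : Multiset ℕ) ≤ R₂ + {a, b} := Multiset.le_add_left _ _
  have hz := h.mono hle
  have hsa : ({a} : Multiset ℕ) ≤ {a, b} := by simp
  have hsb : ({b} : Multiset ℕ) ≤ {a, b} := by simp
  have ha0 : (a : ZMod n) ≠ 0 := by
    have := hz {a} hsa (by simp)
    rwa [← ZMod.natCast_eq_zero_iff, Multiset.sum_singleton] at this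
  have hb0 : (b : ZMod n) ≠ 0 := by
    have := hz {b} hsb (by simp)
    rwa [← ZMod.natCast_eq_zero_iff, Multiset.sum_singleton] at this
  have hab0 : (a : ZMod n) + b ≠ 0 := by
    have := hz {a, b} le_rfl (by simp)
    rw [← ZMod.natCast_eq_zero_iff] at this
    simpa using this
  have h4 : 4 ≤ (residues n {a, b}).card := by
    have hsub : ({0, (a : ZMod n), (b : ZMod n), (a : ZMod n) + b} : Finset (ZMod n)) ⊆
        residues n {a, b} := by
      intro y hy
      simp only [Finset.mem_insert, Finset.mem_singleton] at hy
      rw [mem_residues]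
      rcases hy with rfl | rfl | rfl | rfl
      · exact ⟨0, Multiset.zero_le _, by simp⟩
      · exact ⟨{a}, hsa, by simp⟩
      · exact ⟨{b}, hsb, by simp⟩
      · exact ⟨{a, b}, le_rfl, by simp⟩
    refine le_trans ?_ (Finset.card_le_card hsub)
    rw [Finset.card_insert_of_notMem, Finset.card_insert_of_notMem,
      Finset.card_insert_of_notMem, Finset.card_singleton]
    · simpa using ha0
    · simp [hab, hb0]
    · simp [ha0.symm, hb0.symm, hab0.symm]
  simp at hc
  omega

/-! ### The two ranges of the total sum -/

lemma sum_lt_of_full {n N : ℕ} (hn : 1 ≤ n) (hN : 1 ≤ N) (hdvd : n ∣ N) {S U : Multiset ℕ}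
    (hfree : ∀ T ≤ S, T ≠ 0 → ¬ (N ≤ T.sum ∧ n ∣ T.sum)) (hU : U ≤ S) (hfull : Full U)
    (hs : n ≤ U.sum + 1) : S.sum < N := by
  by_contra! hge
  have hr : S.sum % n < n := Nat.mod_lt _ (by omega)
  obtain ⟨W, hW, hWs⟩ := hfull (S.sum % n) (by omega)
  obtain ⟨V, rfl⟩ := Multiset.le_iff_exists_add.mp (hW.trans hU)
  have hV : V.sum = n * ((W + V).sum / n) := by
    have := Nat.mod_add_div (W + V).sum n
    rw [← hWs] at this
    rw [Multiset.sum_add] at this ⊢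
    omega
  obtain ⟨q, rfl⟩ := hdvd
  have hNV : n * q ≤ V.sum := by
    rw [hV]
    apply Nat.mul_le_mul_left
    rw [Nat.le_div_iff_mul_le (by omega)]
    rwa [mul_comm]
  refine hfree V (Multiset.le_add_left _ _) ?_ ⟨hNV, ?_⟩
  · rintro rfl
    rw [Multiset.sum_zero] at hNV
    omega
  · rw [hV]
    exact Dvd.intro _ rfl

/-- Here `N = M + n`. The conclusion lists the shapes (ii) and (iii); the sum condition on `S`
excludes (i), (iv) and (v). -/
lemma eq_or_of_large_sum {n M : ℕ} (hn : 1 ≤ n) (hM : 1 ≤ M) (hdvd : n ∣ M) {S : Multiset ℕ}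
    (hpos : ∀ x ∈ S, 1 ≤ x) (hlen : M + 2 * n - 2 ≤ 2 * S.card)
    (hfree : ∀ T ≤ S, T ≠ 0 → ¬ (M + n ≤ T.sum ∧ n ∣ T.sum)) (hge : M + n ≤ S.sum) :
    (3 ≤ n ∧ Odd n ∧ 2 * S.card = M + 2 * n - 2 ∧ S = Multiset.replicate S.card 2) ∨
    (n = 2 ∧ ∃ z, 3 ≤ z ∧ Odd z ∧ S = Multiset.replicate (M / 2) 2 + {z}) := by
  have hnofull : ∀ U ≤ S, Full U → U.sum + 1 < n := by
    intro U hU hf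
    by_contra! hcon
    exact absurd (sum_lt_of_full hn (by omega) (by simpa using hdvd) hfree hU hf hcon)
      (by omega)
  have hn2 : 2 ≤ n := by
    have := hnofull 0 (Multiset.zero_le _) (full_replicate_one 0)
    rw [Multiset.sum_zero] at this
    omega
  have hposU : ∀ U ≤ S, ∀ x ∈ U, 1 ≤ x := fun U hU x hx => hpos x (Multiset.mem_of_le hU hx)
  -- Every sub-multiset with sum divisible by `n` satisfies `2|T| ≤ σ(T) ≤ M`.
  have hup : ∀ T ≤ S, n ∣ T.sum → T.sum ≤ M := by
    intro T hT hd
    by_contra! hcon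
    have h0 : T ≠ 0 := by rintro rfl; simp at hcon
    refine hfree T hT h0 ⟨?_, hd⟩
    obtain ⟨q, rfl⟩ := hdvd
    obtain ⟨p, hp⟩ := hd
    rw [hp] at hcon ⊢
    have : q + 1 ≤ p := lt_of_mul_lt_mul_left hcon (Nat.zero_le n)
    calc n * q + n = n * (q + 1) := by ring
      _ ≤ n * p := Nat.mul_le_mul_left _ this
  have hlow : ∀ T ≤ S, n ∣ T.sum → 2 * T.card ≤ T.sum := by
    intro T hT hd
    by_contra! hcon
    have h1 := hnofull T hT (full_of_sum_lt T (hposU T hT) (by omega))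
    have h2 := card_le_sum_of_pos (hposU T hT)
    have h3 := Nat.le_of_dvd (by omega) hd
    omega
  obtain ⟨T, hTmem, hTmax⟩ := Finset.exists_max_image
    (S.powerset.toFinset.filter (fun T => n ∣ T.sum)) Multiset.card ⟨0, by simp⟩
  simp only [Finset.mem_filter, Multiset.mem_toFinset, Multiset.mem_powerset] at hTmem hTmax
  obtain ⟨hTS, hTd⟩ := hTmem
  obtain ⟨R, rfl⟩ := Multiset.le_iff_exists_add.mp hTS
  have hR : ZFree n R := by
    intro U hU hU0 hd
    have h1 := hTmax (T + U) ⟨by simpa using hU, by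
      rw [Multiset.sum_add]; exact dvd_add hTd hd⟩
    have h2 := Multiset.card_pos.mpr hU0
    rw [Multiset.card_add] at h1
    omega
  have hRc := hR.card_lt hn
  have hT1 := hup T hTS hTd
  have hT2 := hlow T hTS hTd
  rw [Multiset.card_add] at hlen
  have hRcard : R.card + 1 = n := by omega
  have hTsum : T.sum = M := by omega
  have hTcard : 2 * T.card = M := by omega
  -- Terms of `T` that are nonzero modulo `n` are congruent to, and no smaller than, those of `R`.
  have hcmp : ∀ x ∈ T, ¬ n ∣ x → ∀ r ∈ R, (x : ZMod n) = (r : ZMod n) ∧ r ≤ x := by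
    intro x hx hnx r hr
    obtain ⟨T', rfl⟩ := Multiset.exists_cons_of_mem hx
    have hxr : (x : ZMod n) = (r : ZMod n) := by
      obtain ⟨U, hU, hUs⟩ := hR.exists_sum_eq hn hRcard (x : ZMod n)
      have hd : n ∣ (T' + U).sum := by
        rw [← ZMod.natCast_eq_zero_iff] at hTd ⊢
        rw [Multiset.sum_add, Nat.cast_add, hUs, ← hTd, Multiset.sum_cons, Nat.cast_add, add_comm]
      have hle : T' + U ≤ x ::ₘ T' + R := add_le_add (Multiset.le_cons_self _ _) hU
      have h1 := hTmax _ ⟨hle, hd⟩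
      rw [Multiset.card_add, Multiset.card_cons] at h1
      have hU0 : U ≠ 0 := by
        rintro rfl
        rw [Multiset.sum_zero, Nat.cast_zero] at hUs
        exact hnx ((ZMod.natCast_eq_zero_iff _ _).mp hUs.symm)
      have h2 := Multiset.card_pos.mpr hU0
      obtain ⟨u, rfl⟩ := Multiset.card_eq_one.mp (show U.card = 1 by omega)
      rw [Multiset.sum_singleton] at hUs
      rw [← hUs]
      exact hR.congr_of_card hn hRcard (Multiset.mem_of_le hU (by simp)) hr
    refine ⟨hxr, ?_⟩
    have hd : n ∣ (T' + {r}).sum := by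
      rw [← ZMod.natCast_eq_zero_iff] at hTd ⊢
      rw [Multiset.sum_add, Nat.cast_add, Multiset.sum_singleton, ← hxr, ← hTd,
        Multiset.sum_cons, Nat.cast_add, add_comm]
    have hle : T' + {r} ≤ x ::ₘ T' + R :=
      add_le_add (Multiset.le_cons_self _ _) (by simpa using hr)
    have h1 := hup _ hle hd
    rw [Multiset.sum_cons] at hTsum
    rw [Multiset.sum_add, Multiset.sum_singleton] at h1
    omega
  have hRpos := hposU R (Multiset.le_add_left _ _)
  have hnofullR : R ≠ Multiset.replicate R.card 1 := by
    intro h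
    have h1 := hnofull R (Multiset.le_add_left _ _) (by rw [h]; exact full_replicate_one _)
    have h2 := card_le_sum_of_pos hRpos
    omega
  rcases full_or_of_sum_eq T (hposU T hTS) (by omega) with hf | h2 | ⟨hc, h1⟩
  · have h1 := hnofull T hTS hf
    have h2 := Nat.le_of_dvd (by omega) hTd
    omega
  · have hmem2 : 2 ∈ T := by
      rw [h2, Multiset.mem_replicate]
      exact ⟨by omega, rfl⟩
    rcases hn2.eq_or_lt with rfl | hn3
    · right
      refine ⟨rfl, ?_⟩
      obtain ⟨z, rfl⟩ := Multiset.card_eq_one.mp (show R.card = 1 by omega)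
      have hz1 := hRpos z (by simp)
      have hzodd : ¬ 2 ∣ z := by simpa using hR {z} le_rfl (by simp)
      have hz2 : z ≠ 1 := by
        rintro rfl
        exact hnofullR (by simp)
      refine ⟨z, by omega, Nat.odd_iff.mpr (by omega), ?_⟩
      rw [← hTcard, Nat.mul_div_cancel_left _ (by norm_num), ← h2]
    · left
      have hn2' : ¬ n ∣ 2 := fun h => by have := Nat.le_of_dvd (by norm_num) h; omega
      have hR2 : R = Multiset.replicate R.card 2 := by
        rw [Multiset.eq_replicate_card]
        intro r hr
        obtain ⟨he, hle⟩ := hcmp 2 hmem2 hn2' r hr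
        have h1 := hRpos r hr
        by_contra hne
        obtain rfl : r = 1 := by omega
        -- `1 ≡ 2` modulo `n` is impossible.
        have : ((2 : ℕ) : ZMod n) - ((1 : ℕ) : ZMod n) = ((1 : ℕ) : ZMod n) := by
          push_cast; ring
        rw [he, sub_self, eq_comm, ZMod.natCast_eq_zero_iff] at this
        have := Nat.le_of_dvd (by norm_num) this
        omega
      refine ⟨hn3, ?_, by rw [Multiset.card_add]; omega, ?_⟩
      · by_contra hodd
        rw [Nat.not_odd_iff_even] at hodd
        obtain ⟨c, rfl⟩ := hodd
        refine hR (Multiset.replicate c 2) ?_ ?_ ?_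
        · rw [hR2, Multiset.replicate_le_replicate]
          omega
        · intro h
          have := congrArg Multiset.card h
          rw [Multiset.card_replicate, Multiset.card_zero] at this
          omega
        · rw [Multiset.sum_replicate, smul_eq_mul]
          exact ⟨1, by ring⟩
      · rw [Multiset.card_add, Multiset.replicate_add, ← h2, ← hR2]
  · exfalso
    apply hnofullR
    rw [Multiset.eq_replicate_card]
    intro r hr
    have hmem1 : 1 ∈ T := by
      rw [h1]
      apply Multiset.mem_cons_of_mem
      rw [Multiset.mem_replicate]
      exact ⟨by omega, rfl⟩
    have h3 := (hcmp 1 hmem1 (fun h => by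
      have := Nat.le_of_dvd (by norm_num) h; omega) r hr).2
    have h4 := hRpos r hr
    omega

theorem idempotent_sum_free_structure (k n : ℕ) (hn : 1 ≤ n) (hkn : n < k)
    (S : Multiset ℕ) (hmem : ∀ x ∈ S, 1 ≤ x ∧ x ≤ k + n - 1)
    (hlen : (nCeil k n + 1) * n - 2 ≤ 2 * Multiset.card S) :
    IdempotentSumFree k n S ↔
      (OneSmooth S ∧ S.sum ≤ nCeil k n * n - 1) ∨
      (3 ≤ n ∧ Odd (nCeil k n * n) ∧
        S = Multiset.replicate ((nCeil k n + 1) * n / 2 - 1) 2) ∨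
      (n = 2 ∧ ∃ z : ℕ, 3 ≤ z ∧ Odd z ∧
        S = Multiset.replicate (nCeil k 2 - 1) 2 + {z}) ∨
      (n = 1 ∧ Odd k ∧ S = Multiset.replicate ((k - 3) / 2) 1 + {(k + 1) / 2}) ∨
      (n = 1 ∧ Odd k ∧ S = Multiset.replicate ((k - 1) / 2) 2) := by
  have hpos : ∀ x ∈ S, 1 ≤ x := fun x hx => (hmem x hx).1
  have hm2 : 2 ≤ nCeil k n := by
    unfold nCeil
    rw [Nat.le_div_iff_mul_le (by omega)]
    omega
  have hk1 : nCeil k 1 = k := by simp [nCeil]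
  have hbig : ∀ T : Multiset ℕ, T ≤ S → S.sum < nCeil k n * n → ¬ nCeil k n * n ≤ T.sum :=
    fun T hT h => by have := sum_le_sum_of_le hT; omega
  generalize hm : nCeil k n = m at *
  obtain ⟨q, rfl⟩ : ∃ q, m = q + 2 := ⟨m - 2, by omega⟩
  constructor
  · intro hfree
    unfold IdempotentSumFree at hfree
    rw [hm] at hfree
    rw [show (q + 2 + 1) * n = q * n + 3 * n by ring] at hlen ⊢
    rw [show (q + 2) * n = q * n + 2 * n by ring] at hfree ⊢
    by_cases hs : S.sum ≤ q * n + 2 * n - 1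
    · by_cases hlt : S.sum ≤ 2 * S.card - 1
      · exact Or.inl ⟨oneSmooth_of_full hpos (full_of_sum_lt S hpos hlt), hs⟩
      · have hn1 : n = 1 := by omega
        subst hn1
        have hkq : k = q + 2 := by omega
        have hcard : S.card ≠ 0 := by omega
        rcases full_or_of_sum_eq S hpos (by omega) with hf | h2 | ⟨hc, h1⟩
        · exact Or.inl ⟨oneSmooth_of_full hpos hf, hs⟩
        · refine Or.inr (Or.inr (Or.inr (Or.inr ⟨rfl, ?_, ?_⟩)))
          · rw [Nat.odd_iff]; omega
          · rw [h2]
            congr 1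
            omega
        · refine Or.inr (Or.inr (Or.inr (Or.inl ⟨rfl, ?_, ?_⟩)))
          · rw [Nat.odd_iff]; omega
          · rw [h1, ← Multiset.singleton_add, add_comm]
            congr 2 <;> omega
    · rcases eq_or_of_large_sum (n := n) (M := q * n + n) hn (by omega)
        ⟨q + 1, by ring⟩ hpos (by omega)
        (by intro T hT h0; have := hfree T hT h0; rwa [two_mul, ← add_assoc] at this)
        (by omega) with ⟨h3, hodd, hc, hS⟩ | ⟨rfl, z, hz3, hzo, hS⟩
      · refine Or.inr (Or.inl ⟨h3, ?_, ?_⟩)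
        · have := Nat.odd_iff.mp hodd
          rw [Nat.odd_iff]
          omega
        · rw [hS]
          congr 1
          omega
      · refine Or.inr (Or.inr (Or.inl ⟨rfl, z, hz3, hzo, ?_⟩))
        rw [hS, hm]
        congr 2
        omega
  · intro h T hT hT0
    rw [hm]
    rintro ⟨hge, hd⟩
    rcases h with ⟨-, hs⟩ | ⟨h3, hodd, rfl⟩ | ⟨rfl, z, hz3, hzo, rfl⟩ | ⟨rfl, hk, rfl⟩ |
      ⟨rfl, hk, rfl⟩
    · exact hbig T hT (by have : 0 < (q + 2) * n := by positivity
                          omega) hge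
    · -- The sum `2j` is `n * c` with `c` even and `c ≥ q + 2`; since `q + 2` is odd, `c ≥ q + 3`.
      obtain ⟨j, hj, rfl⟩ := Multiset.le_replicate_iff.mp hT
      rw [Multiset.sum_replicate, smul_eq_mul] at hge hd
      obtain ⟨c, hc⟩ := hd
      rw [Nat.odd_mul] at hodd
      have hcev : Even c := by
        have h2 : Even (n * c) := hc ▸ even_two.mul_left j
        rcases Nat.even_mul.mp h2 with h | h
        · exact absurd hodd.2 (Nat.not_odd_iff_even.mpr h)
        · exact h
      have hcge : q + 2 ≤ c := by
        rw [hc, mul_comm] at hge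
        exact le_of_mul_le_mul_left hge (by omega)
      have hcge' : q + 3 ≤ c := by
        have h1 := Nat.odd_iff.mp hodd.1
        have h2 := Nat.even_iff.mp hcev
        omega
      have h5 : (q + 2 + 1) * n ≤ n * c := by
        rw [mul_comm]
        exact Nat.mul_le_mul_left _ hcge'
      have h6 : 0 < (q + 2 + 1) * n := by positivity
      omega
    · rw [hm] at hT
      have hz : z ∉ T := by
        intro hz
        obtain ⟨T', rfl⟩ := Multiset.exists_cons_of_mem hz
        rw [add_comm, Multiset.singleton_add, Multiset.cons_le_cons_iff] at hT
        obtain ⟨j, hj, rfl⟩ := Multiset.le_replicate_iff.mp hT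
        rw [Multiset.sum_cons, Multiset.sum_replicate, smul_eq_mul] at hd
        have := Nat.odd_iff.mp hzo
        omega
      rw [add_comm, Multiset.singleton_add, Multiset.le_cons_of_notMem hz] at hT
      have := sum_le_sum_of_le hT
      rw [Multiset.sum_replicate, smul_eq_mul] at this
      omega
    · refine hbig T hT ?_ hge
      have := Nat.odd_iff.mp hk
      simp
      omega
    · refine hbig T hT ?_ hge
      have := Nat.odd_iff.mp hk
      simp
      omega
end

section
/- Let 1 ≤ k ≤ n be integers and let S be a nonempty finite multiset of integers from the interval [1, k+n−1]. Then: (a) S is idempotent-sum free if and only if the multiset of residues {s mod n : s ∈ S} over ZMod n is zero-sum free; (b) S is a minimal idempotent-sum multiset if and only if the multiset of residues {s mod n : s ∈ S} over ZMod n is a minimal zero-sum sequence. -/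
/-!
Since `1 ≤ k ≤ n`, the ceiling `⌈k/n⌉` is `1`, so the size condition `σ(S') ≥ ⌈k/n⌉·n` reads
`σ(S') ≥ n`. For a nonempty sub-multiset `S'` of positive integers `σ(S')` is positive, so this
already follows from `n ∣ σ(S')`, and `n ∣ σ(S')` says exactly that the residues of `S'` sum to
zero (`idempotent_sum_iff`). It remains to match the sub-multisets of the residue multiset with
the sub-multisets of `S`: each of them is the image of one (`exists_le_map_eq`), and nonemptiness
and properness are preserved in both directions because mapping preserves cardinality.
-/

open Multiset

lemma nCeil_eq_one {k n : ℕ} (hk : 1 ≤ k) (hkn : k ≤ n) : nCeil k n = 1 := by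
  unfold nCeil
  exact Nat.div_eq_of_lt_le (by omega) (by omega)

lemma exists_le_map_eq {α β : Type*} (f : α → β) {S : Multiset α} {U : Multiset β}
    (h : U ≤ S.map f) : ∃ S' ≤ S, S'.map f = U := by
  induction S using Quotient.inductionOn with
  | h l =>
    induction U using Quotient.inductionOn with
    | h u =>
      obtain ⟨w, hwu, hw⟩ : u.Subperm (l.map f) := h
      obtain ⟨l', hl', rfl⟩ := List.sublist_map_iff.1 hw
      exact ⟨(l' : Multiset α), hl'.subperm, Quotient.sound hwu⟩

lemma idempotent_sum_iff {k n : ℕ} (hk : 1 ≤ k) (hkn : k ≤ n) {S : Multiset ℕ} (hS : S ≠ 0)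
    (hpos : ∀ x ∈ S, 1 ≤ x) :
    (nCeil k n * n ≤ S.sum ∧ n ∣ S.sum) ↔ (S.map (Nat.cast : ℕ → ZMod n)).sum = 0 := by
  have hcast : (S.map (Nat.cast : ℕ → ZMod n)).sum = (S.sum : ZMod n) :=
    (Nat.cast_multiset_sum S).symm
  rw [nCeil_eq_one hk hkn, one_mul, hcast, ZMod.natCast_eq_zero_iff]
  refine ⟨fun h => h.2, fun h => ⟨Nat.le_of_dvd ?_ h, h⟩⟩
  obtain ⟨x, hx⟩ := Multiset.exists_mem_of_ne_zero hS
  exact (hpos x hx).trans (Multiset.le_sum_of_mem hx)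

theorem idempotent_sum_free_iff_residues_zero_sum_free (k n : ℕ)
    (hk : 1 ≤ k) (hkn : k ≤ n)
    (S : Multiset ℕ) (hS : S ≠ 0) (hmem : ∀ x ∈ S, 1 ≤ x ∧ x ≤ k + n - 1) :
    (IdempotentSumFree k n S ↔ ZeroSumFree (S.map (fun s => (s : ZMod n)))) ∧
    (MinimalIdempotentSum k n S ↔ MinimalZeroSum (S.map (fun s => (s : ZMod n)))) := by
  -- The coercion in the statement elaborates to the lift `do let a ← S; pure ↑a` of the whole
  -- multiset in the `Multiset` monad; this is the image of `S` under the cast.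
  have hres : (S.map (fun s => (s : ZMod n))) = Multiset.map (Nat.cast : ℕ → ZMod n) S := by
    rw [Multiset.map_id']
    exact Multiset.bind_singleton S _
  rw [hres]
  have key : ∀ S' ≤ S, S' ≠ 0 → ((nCeil k n * n ≤ S'.sum ∧ n ∣ S'.sum) ↔
      (S'.map (Nat.cast : ℕ → ZMod n)).sum = 0) := fun S' hle hne =>
    idempotent_sum_iff hk hkn hne fun x hx => (hmem x (Multiset.mem_of_le hle hx)).1
  refine ⟨⟨fun h U hU hU0 => ?_, fun h S' hle hne hsum => ?_⟩, ?_⟩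
  · obtain ⟨S', hle, rfl⟩ := exists_le_map_eq _ hU
    have hne : S' ≠ 0 := fun h0 => hU0 (by simp [h0])
    exact fun hsum => h S' hle hne ((key S' hle hne).2 hsum)
  · exact h _ (Multiset.map_le_map hle) (by simpa using hne) ((key S' hle hne).1 hsum)
  · refine and_congr (by simp) (and_congr (key S le_rfl hS) ⟨fun h U hU hU0 => ?_,
      fun h S' hlt hne hsum => ?_⟩)
    · obtain ⟨S', hle, rfl⟩ := exists_le_map_eq _ hU.le
      have hne : S' ≠ 0 := fun h0 => hU0 (by simp [h0])
      have hlt : S' < S := lt_of_le_of_ne hle fun he => hU.ne (by rw [he])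
      exact fun hsum => h S' hlt hne ((key S' hle hne).2 hsum)
    · exact h _ (Multiset.map_lt_map hlt) (by simpa using hne) ((key S' hlt.le hne).1 hsum)
end

section
/- Let k > n ≥ 1 be integers and let S be a finite multiset of integers from the interval [1, k+n−1] with |S| ≥ ⌊(⌈k/n⌉+1)·n/2⌋. Then S is idempotent-sum free if and only if S is 1-smooth and σ(S) ≤ ⌈k/n⌉·n − 1. -/
/-!
Write `m = ⌈k/n⌉`, so `m ≥ 2`. If `σ(S) < mn`, then `S` is trivially idempotent-sum free. Also
`σ(S) < 2|S|` by the length hypothesis, and a multiset of positive integers with this property has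
every integer of `[0, σ(S)]` as a subset sum (`exists_sum_eq_of_sum_lt`).

It remains to see that an idempotent-sum free `S` has `σ(S) < mn`. By pigeonhole, `S = U + T` with
`n ∣ σ(U)` and `|T| < n` (`exists_add_dvd_card_lt`). Idempotent-sum freeness gives
`σ(U) ≤ (m-1)n`, while `|U| ≥ |S| - (n-1)` gives `(m-1)n < 2|U|`, so `U` attains every subset sum
in `[0, σ(U)]`. Moreover `U` is nonempty, hence `σ(U) ≥ n`, and some `V ≤ U` has sum
`σ(U) - (σ(T) mod n)`. Now `σ(V + T) = σ(U) + n⌊σ(T)/n⌋` is divisible by `n`, hence at most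
`(m-1)n`, and `σ(S) = σ(V + T) + (σ(T) mod n) < mn`.
-/

open Multiset

/-- If the average of a multiset of positive integers is below `2`, then every integer up to its
total is a subset sum. An element `a ≥ 2` can be split off: the remaining sum is at least
`a - 1`, so the subset sums of the rest and their translates by `a` leave no gap. -/
lemma exists_sum_eq_of_sum_lt (N : ℕ) : ∀ S : Multiset ℕ, Multiset.card S = N →
    (∀ x ∈ S, 1 ≤ x) → S.sum < 2 * Multiset.card S →
    ∀ x ≤ S.sum, ∃ V ≤ S, V.sum = x := by
  induction N with
  | zero => intro S hS _ h; omega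
  | succ N ih =>
    intro S hS hpos hlt x hx
    by_cases hbig : ∃ a ∈ S, 2 ≤ a
    · obtain ⟨a, haS, ha⟩ := hbig
      obtain ⟨R, rfl⟩ := Multiset.exists_cons_of_mem haS
      rw [Multiset.sum_cons] at hlt hx
      rw [Multiset.card_cons] at hlt hS
      have hRpos : ∀ y ∈ R, 1 ≤ y := fun y hy => hpos y (Multiset.mem_cons_of_mem hy)
      have hR : Multiset.card R ≤ R.sum := by
        simpa using Multiset.card_nsmul_le_sum hRpos
      have key := ih R (by omega) hRpos (by omega)
      by_cases hxR : x ≤ R.sum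
      · obtain ⟨V, hV, hVx⟩ := key x hxR
        exact ⟨V, hV.trans (Multiset.le_cons_self R a), hVx⟩
      · obtain ⟨V, hV, hVx⟩ := key (x - a) (by omega)
        refine ⟨a ::ₘ V, Multiset.cons_le_cons a hV, ?_⟩
        rw [Multiset.sum_cons]
        omega
    · push Not at hbig
      have hrep : S = Multiset.replicate (N + 1) 1 :=
        Multiset.eq_replicate.2 ⟨hS, fun b hb => by
          have := hpos b hb
          have := hbig b hb
          omega⟩
      rw [hrep] at hx ⊢
      exact ⟨Multiset.replicate x 1, by
        rw [Multiset.replicate_le_replicate]; simpa [add_comm] using hx, by simp⟩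

/-- Pigeonhole on prefix sums: among any `n` integers some nonempty subfamily has sum divisible
by `n`. -/
lemma exists_le_dvd_sum (n : ℕ) (hn : 1 ≤ n) (S : Multiset ℕ) (hS : n ≤ Multiset.card S) :
    ∃ V ≤ S, V ≠ 0 ∧ n ∣ V.sum := by
  induction S using Quotient.inductionOn with
  | h l =>
  have hl : n ≤ l.length := by simpa using hS
  obtain ⟨i, hi, j, hj, hij, heq⟩ := Finset.exists_ne_map_eq_of_card_lt_of_maps_to
    (s := Finset.range (n + 1)) (t := Finset.range n) (f := fun i => (l.take i).sum % n)
    (by simp) (fun i _ => by simpa using Nat.mod_lt _ hn)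
  wlog hlt : i < j generalizing i j
  · exact this j hj i hi hij.symm heq.symm (by omega)
  have hj' : j ≤ n := by simpa [Nat.lt_succ_iff] using hj
  refine ⟨(((l.take j).drop i : List ℕ) : Multiset ℕ), ?_, ?_, ?_⟩
  · exact Multiset.coe_le.2 (((List.drop_sublist _ _).trans (List.take_sublist _ _)).subperm)
  · intro h
    have := congrArg Multiset.card h
    simp at this
    omega
  · have h1 : (l.take j).sum = (l.take i).sum + ((l.take j).drop i).sum := by
      rw [← List.sum_take_add_sum_drop (l.take j) i, List.take_take, min_eq_left hlt.le]
    rw [Multiset.sum_coe]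
    have h2 : (l.take i).sum ≡ (l.take j).sum [MOD n] := heq
    have h3 := (Nat.modEq_iff_dvd' (by omega)).1 h2
    rwa [h1, Nat.add_sub_cancel_left] at h3

lemma exists_add_dvd_card_lt (n : ℕ) (hn : 1 ≤ n) (S : Multiset ℕ) :
    ∃ U T : Multiset ℕ, S = U + T ∧ n ∣ U.sum ∧ Multiset.card T < n := by
  induction S using Multiset.strongInductionOn with
  | ih S ih =>
  by_cases hS : Multiset.card S < n
  · exact ⟨0, S, by simp, by simp, hS⟩
  · obtain ⟨V, hVS, hV0, hV⟩ := exists_le_dvd_sum n hn S (by omega)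
    obtain ⟨R, rfl⟩ := Multiset.le_iff_exists_add.1 hVS
    have hRlt : R < V + R := lt_add_of_pos_left R (pos_iff_ne_zero.2 hV0)
    obtain ⟨U, T, rfl, hU, hT⟩ := ih R hRlt
    exact ⟨V + U, T, by rw [add_assoc], by rw [Multiset.sum_add]; exact dvd_add hV hU, hT⟩

theorem long_idempotent_sum_free_iff_one_smooth (k n : ℕ) (hn : 1 ≤ n) (hkn : n < k)
    (S : Multiset ℕ) (hmem : ∀ x ∈ S, 1 ≤ x ∧ x ≤ k + n - 1)
    (hlen : (nCeil k n + 1) * n / 2 ≤ Multiset.card S) :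
    IdempotentSumFree k n S ↔ OneSmooth S ∧ S.sum ≤ nCeil k n * n - 1 := by
  have hm : 2 ≤ nCeil k n := by
    unfold nCeil
    rw [Nat.le_div_iff_mul_le hn]
    omega
  have hpos : ∀ x ∈ S, 1 ≤ x := fun x hx => (hmem x hx).1
  unfold IdempotentSumFree
  generalize nCeil k n = m at *
  have hmn : 2 * n ≤ m * n := Nat.mul_le_mul_right n hm
  have hm1 : (m + 1) * n = m * n + n := by ring
  constructor
  · intro hfree
    have hsum : S.sum < m * n := by
      obtain ⟨U, T, rfl, hU, hT⟩ := exists_add_dvd_card_lt n hn S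
      rw [Multiset.card_add] at hlen
      -- The empty multiset satisfies the bound as well, since `n ≤ m * n`.
      have hfree' : ∀ V ≤ U + T, n ∣ V.sum → V.sum + n ≤ m * n := by
        intro V hV hdvd
        by_cases hV0 : V = 0
        · subst hV0
          simp only [Multiset.sum_zero]
          omega
        · have h1 : V.sum < m * n := by
            by_contra hcon
            exact hfree V hV hV0 ⟨by omega, hdvd⟩
          obtain ⟨c, hc⟩ := hdvd
          rw [hc, mul_comm n c] at h1 ⊢
          have h2 : c + 1 ≤ m := Nat.lt_of_mul_lt_mul_right h1
          calc c * n + n = (c + 1) * n := by ring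
            _ ≤ m * n := Nat.mul_le_mul_right n h2
      have hUle := hfree' U (Multiset.le_add_right U T) hU
      have hUpos : ∀ x ∈ U, 1 ≤ x := fun x hx => hpos x (Multiset.mem_add.2 (Or.inl hx))
      have hUcard : Multiset.card U ≤ U.sum := by
        simpa using Multiset.card_nsmul_le_sum hUpos
      have hnU : n ≤ U.sum := Nat.le_of_dvd (by omega) hU
      have hr : T.sum % n < n := Nat.mod_lt _ hn
      obtain ⟨V, hVU, hV⟩ := exists_sum_eq_of_sum_lt _ U rfl hUpos (by omega)
        (U.sum - T.sum % n) (by omega)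
      have hdiv := Nat.div_add_mod T.sum n
      have hVT : (V + T).sum = U.sum + n * (T.sum / n) := by
        rw [Multiset.sum_add]
        omega
      have := hfree' (V + T) (by gcongr)
        (by rw [hVT]; exact dvd_add hU (dvd_mul_right _ _))
      rw [Multiset.sum_add]
      omega
    refine ⟨?_, by omega⟩
    ext x
    constructor
    · rintro ⟨V, hV, hV0, rfl⟩
      obtain ⟨W, rfl⟩ := Multiset.le_iff_exists_add.1 hV
      obtain ⟨a, ha⟩ := Multiset.exists_mem_of_ne_zero hV0
      have h1 := Multiset.single_le_sum (fun y _ => Nat.zero_le y) a ha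
      have h2 := hpos a (Multiset.mem_add.2 (Or.inl ha))
      refine ⟨h2.trans h1, ?_⟩
      rw [Multiset.sum_add]
      omega
    · rintro ⟨hx1, hx2⟩
      obtain ⟨V, hV, rfl⟩ := exists_sum_eq_of_sum_lt _ S rfl hpos (by omega) x hx2
      refine ⟨V, hV, ?_, rfl⟩
      rintro rfl
      simp at hx1
  · rintro ⟨-, hsum⟩ V hV - ⟨hle, -⟩
    obtain ⟨W, rfl⟩ := Multiset.le_iff_exists_add.1 hV
    rw [Multiset.sum_add] at hsum
    omega
end

section
/- Let n = 6 or n ≥ 8, and define a finite multiset T over ZMod n as follows: if n is odd, T consists of (n−5)/2 copies of the residue 1 and two copies of the residue (n+3)/2; if n is even, T consists of (n−4)/2 copies of the residue 1 and two copies of the residue (n+2)/2. Then T is zero-sum free, |T| = ⌊n/2⌋, and T is not g-smooth for any g ∈ ZMod n of additive order n. -/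
/-!
Write `T` as `k` copies of `1` and two copies of `h`, where `2 * h = n + 3` or `2 * h = n + 2`.

Zero-sum freeness holds because a nonempty subsum is `a + b * h` with `a ≤ k`, `b ≤ 2`, and
this integer lies strictly between two consecutive multiples of `n`: in `(0, n)` when `b ≤ 1`,
and in `(n, 2 * n)` when `b = 2`.

For non-smoothness, the requirement `1 ∈ c` forces `g ∈ T`, so `g = 1` or `g = h`. In either
case the coefficients in `c` representing `1` and `h` are bounded below by their residues, and
already `c.sum ≥ n`, contradicting `c.sum < n`. With `g = 1` the two copies of `h` alone
contribute `2 * h > n`. With `g = h`, a coefficient `m` of `1` satisfies `m * h ≡ 1`, that is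
`3 * m ≡ 2` (odd `n`) or `2 * m ≡ 2` with `m ≠ 1` (even `n`); so `m` is at least about `n / 3`,
respectively `n / 2 + 1`, and it occurs `k` times.
-/

open Multiset

/-- Zero-sum freeness reduced to integers: the subsums of `T` are the residues `a + b * h`. -/
lemma zeroSumFree_replicate {n k h : ℕ}
    (H : ∀ a b : ℕ, a ≤ k → b ≤ 2 → 0 < a + b → ¬ n ∣ a + b * h) :
    ZeroSumFree (Multiset.replicate k (1 : ZMod n) + Multiset.replicate 2 (h : ZMod n)) := by
  intro U hU hU0 hsum
  set A := Multiset.replicate k (1 : ZMod n) with hA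
  obtain ⟨a, ha, hUa⟩ := Multiset.le_replicate_iff.1 (Multiset.inter_le_right : U ∩ A ≤ A)
  have h1 : U - A ≤ Multiset.replicate 2 (h : ZMod n) := tsub_le_iff_left.2 hU
  obtain ⟨b, hb, hUb⟩ := Multiset.le_replicate_iff.1 h1
  have hdec : U = Multiset.replicate b (h : ZMod n) + Multiset.replicate a 1 := by
    rw [← hUa, ← hUb, Multiset.sub_add_inter]
  refine H a b ha hb ?_ ?_
  · rcases Nat.eq_zero_or_pos (a + b) with h0 | h0
    · obtain ⟨rfl, rfl⟩ : a = 0 ∧ b = 0 := by omega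
      exact absurd (by simpa using hdec) hU0
    · exact h0
  · rw [← ZMod.natCast_eq_zero_iff]
    rw [hdec] at hsum
    simp only [Multiset.sum_add, Multiset.sum_replicate, nsmul_eq_mul, mul_one] at hsum
    push_cast
    rw [add_comm]
    exact hsum

/-- Lower bounds `L₁`, `L₂` on the coefficients representing `1` and `h` give a lower bound on
the sum of all coefficients. -/
lemma le_coeff_sum {n k h L₁ L₂ : ℕ} {g : ZMod n} {c : Multiset ℕ} (h1 : (h : ZMod n) ≠ 1)
    (hc : Multiset.replicate k (1 : ZMod n) + Multiset.replicate 2 (h : ZMod n) =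
      c.map (fun m => m • g))
    (H1 : ∀ m ∈ c, m • g = 1 → L₁ ≤ m) (H2 : ∀ m ∈ c, m • g = h → L₂ ≤ m) :
    k * L₁ + 2 * L₂ ≤ c.sum := by
  have key : (c.map (fun m => if m • g = 1 then L₁ else L₂)).sum ≤ c.sum := by
    conv_rhs => rw [← Multiset.map_id c]
    refine Multiset.sum_map_le_sum_map _ _ fun m hm => ?_
    have hmem : m • g ∈ c.map (fun m => m • g) := Multiset.mem_map_of_mem _ hm
    rw [← hc, Multiset.mem_add] at hmem
    split_ifs with hg
    · exact H1 m hm hg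
    · rcases hmem with hmem | hmem
      · exact absurd (Multiset.eq_of_mem_replicate hmem) hg
      · exact H2 m hm (Multiset.eq_of_mem_replicate hmem)
  have e := congrArg (fun S => (S.map (fun a : ZMod n => if a = 1 then L₁ else L₂)).sum) hc
  simp only [Multiset.map_map, Function.comp_def, Multiset.map_add, Multiset.map_replicate,
    Multiset.sum_add, Multiset.sum_replicate, if_neg h1, if_true, smul_eq_mul] at e
  omega

/-- Non-smoothness reduced to a lower bound `L` on the positive integers `m` with
`m * h ≡ 1 (mod n)`. -/
lemma not_gSmooth_replicate {n k h L : ℕ} (hh : 2 ≤ h) (hhn : h < n) (hn : n ≤ 2 * h)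
    (HL : ∀ m : ℕ, 1 ≤ m → m * h ≡ 1 [MOD n] → L ≤ m) (hL : n ≤ k * L + 2) (g : ZMod n) :
    ¬ GSmooth g (Multiset.replicate k (1 : ZMod n) + Multiset.replicate 2 (h : ZMod n)) := by
  rintro ⟨c, hc, h1c, hpos, hlt, -⟩
  have h1 : (h : ZMod n) ≠ 1 := by
    intro e
    have e' : (h : ZMod n) = ((1 : ℕ) : ZMod n) := by simpa using e
    rw [ZMod.natCast_eq_natCast_iff, Nat.ModEq, Nat.mod_eq_of_lt hhn,
      Nat.mod_eq_of_lt (by omega)] at e'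
    omega
  have hg : g ∈ c.map (fun m => m • g) := Multiset.mem_map.2 ⟨1, h1c, one_smul _ _⟩
  rw [← hc, Multiset.mem_add] at hg
  rcases hg with hg | hg
  · have hg1 := Multiset.eq_of_mem_replicate hg
    subst hg1
    have := le_coeff_sum (L₁ := 1) (L₂ := h) h1 hc (fun m hm _ => hpos m hm) (by
      intro m _ e
      rw [nsmul_eq_mul, mul_one, ZMod.natCast_eq_natCast_iff, Nat.ModEq,
        Nat.mod_eq_of_lt hhn] at e
      exact e ▸ Nat.mod_le m n)
    omega
  · have hg1 := Multiset.eq_of_mem_replicate hg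
    subst hg1
    have := le_coeff_sum (L₁ := L) (L₂ := 1) h1 hc (by
      intro m hm e
      refine HL m (hpos m hm) ?_
      rw [← ZMod.natCast_eq_natCast_iff]
      simpa using e) (fun m hm _ => hpos m hm)
    omega

theorem extremal_not_smooth_sequence (n : ℕ) (hn : n = 6 ∨ 8 ≤ n)
    (T : Multiset (ZMod n))
    (hTodd : Odd n → T = Multiset.replicate ((n - 5) / 2) (1 : ZMod n) +
      Multiset.replicate 2 ((((n + 3) / 2 : ℕ)) : ZMod n))
    (hTeven : Even n → T = Multiset.replicate ((n - 4) / 2) (1 : ZMod n) +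
      Multiset.replicate 2 ((((n + 2) / 2 : ℕ)) : ZMod n)) :
    ZeroSumFree T ∧ Multiset.card T = n / 2 ∧
      ∀ g : ZMod n, addOrderOf g = n → ¬ GSmooth g T := by
  rcases Nat.even_or_odd n with he | ho
  · rw [hTeven he]
    obtain ⟨p, rfl⟩ := he
    have e1 : (p + p - 4) / 2 = p - 2 := by omega
    have e2 : (p + p + 2) / 2 = p + 1 := by omega
    rw [e1, e2]
    refine ⟨zeroSumFree_replicate ?_, ?_, fun g _ => ?_⟩
    · intro a b ha hb hab
      -- the sum lies strictly between `0` and `n` for `b ≤ 1`, between `n` and `2 * n` for `b = 2`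
      interval_cases b
      · exact Nat.not_dvd_of_pos_of_lt (by omega) (by omega)
      · exact Nat.not_dvd_of_pos_of_lt (by omega) (by omega)
      · exact Nat.not_dvd_of_lt_of_lt_mul_succ (k := 1) (by omega) (by omega)
    · simp; omega
    · refine not_gSmooth_replicate (L := p + 1) (by omega) (by omega) (by omega) ?_ ?_ g
      · intro m hm h
        -- reducing `m * (p + 1) ≡ 1 (mod 2 * p)` modulo `p` gives `m ≡ 1 (mod p)`
        have h2 := (Nat.modEq_iff_dvd.1 h)
        obtain ⟨t, ht⟩ := h2
        push_cast at ht
        have h3 : (p : ℤ) ∣ (m : ℤ) - 1 := ⟨-(2 * t) - m, by linear_combination -ht⟩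
        have hm1 : m ≠ 1 := by
          rintro rfl
          have : (p : ℤ) * (2 * t + 1) = 0 := by push_cast at ht; linear_combination -ht
          rcases mul_eq_zero.1 this with h | h <;> omega
        have := Int.le_of_dvd (by omega) h3
        omega
      · obtain ⟨q, rfl⟩ : ∃ q, p = q + 3 := ⟨p - 3, by omega⟩
        have : q + 3 - 2 = q + 1 := by omega
        rw [this]
        nlinarith
  · rw [hTodd ho]
    obtain ⟨p, rfl⟩ := ho
    have e1 : (2 * p + 1 - 5) / 2 = p - 2 := by omega
    have e2 : (2 * p + 1 + 3) / 2 = p + 2 := by omega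
    rw [e1, e2]
    refine ⟨zeroSumFree_replicate ?_, ?_, fun g _ => ?_⟩
    · intro a b ha hb hab
      interval_cases b
      · exact Nat.not_dvd_of_pos_of_lt (by omega) (by omega)
      · exact Nat.not_dvd_of_pos_of_lt (by omega) (by omega)
      · exact Nat.not_dvd_of_lt_of_lt_mul_succ (k := 1) (by omega) (by omega)
    · simp; omega
    · -- `L = ⌈(n + 2) / 3⌉`, because `m * h ≡ 1` gives `3 * m ≡ 2 (mod n)`
      refine not_gSmooth_replicate (L := (2 * p + 5) / 3) (by omega) (by omega) (by omega) ?_ ?_ g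
      · intro m hm h
        obtain ⟨t, ht⟩ := Nat.modEq_iff_dvd.1 h
        push_cast at ht
        have h3 : ((2 * p + 1 : ℕ) : ℤ) ∣ 3 * (m : ℤ) - 2 :=
          ⟨-(2 * t) - m, by push_cast; linear_combination -2 * ht⟩
        have := Int.le_of_dvd (by omega) h3
        omega
      · obtain ⟨q, rfl⟩ : ∃ q, p = q + 4 := ⟨p - 4, by omega⟩
        have : q + 4 - 2 = q + 2 := by omega
        rw [this]
        have : 2 * q + 11 ≤ 3 * ((2 * (q + 4) + 5) / 3) := by omega
        have : 4 ≤ (2 * (q + 4) + 5) / 3 := by omega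
        nlinarith
end

section
/- Let n ≥ 2 and let T be a finite multiset over ZMod n that is a minimal zero-sum sequence with 2·|T| > n and ind(T) = 1. Then T is zero-sum g-smooth for some g ∈ ZMod n of additive order n. -/
/-!
Choose a generator `g` with `‖T‖_g = 1` and let `c` be the multiset of coefficients `nᵢ ∈ [1, n]`
of `T` with respect to `g`, so that `σ(c) = n < 2 |c|`. Then `c` contains a `1`, since otherwise
`σ(c) ≥ 2 |c|`. The heart of the matter is `exists_le_sum_eq`: a multiset of positive integers with
`σ(c) < 2 |c|` attains every value in `[0, σ(c)]` as a subsum. Pushing these subsums forward along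
`m ↦ m • g` gives every `j • g` with `1 ≤ j ≤ n`, which is all of `ZMod n`.
-/

open Multiset

/-- A multiset of positive integers whose average is below `2` realizes every integer in
`[0, σ(c)]` as a subsum. Removing an element `m ≥ 2` keeps the average below `2`, and the subsums
`[0, σ(c) - m]` of the rest together with their translates by `m` leave no gap because
`m ≤ |c| ≤ σ(c) - m + 1`. -/
theorem exists_le_sum_eq (k : ℕ) : ∀ c : Multiset ℕ, Multiset.card c = k → (∀ m ∈ c, 1 ≤ m) →
    c.sum < 2 * Multiset.card c → ∀ j ≤ c.sum, ∃ U ≤ c, U.sum = j := by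
  induction k with
  | zero =>
    intro c hk _ hc
    omega
  | succ k ih =>
    intro c hk hpos hc j hj
    by_cases h : ∃ m ∈ c, 2 ≤ m
    · obtain ⟨m, hm, hm2⟩ := h
      obtain ⟨d, rfl⟩ := Multiset.exists_cons_of_mem hm
      have hposd : ∀ x ∈ d, 1 ≤ x := fun x hx => hpos x (Multiset.mem_cons_of_mem hx)
      have hcard : Multiset.card d ≤ d.sum := by
        simpa using Multiset.card_nsmul_le_sum hposd
      simp only [Multiset.card_cons, Multiset.sum_cons] at hk hc hj
      have ih' := ih d (by omega) hposd (by omega)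
      by_cases hjd : j ≤ d.sum
      · obtain ⟨U, hU, hs⟩ := ih' j hjd
        exact ⟨U, hU.trans (Multiset.le_cons_self d m), hs⟩
      · obtain ⟨U, hU, hs⟩ := ih' (j - m) (by omega)
        refine ⟨m ::ₘ U, (Multiset.cons_le_cons_iff m).2 hU, ?_⟩
        rw [Multiset.sum_cons]
        omega
    · have h1 : ∀ m ∈ c, m = 1 := by
        intro m hm
        have := hpos m hm
        by_contra hne
        exact h ⟨m, hm, by omega⟩
      have hrep := Multiset.eq_replicate_card.2 h1
      refine ⟨Multiset.replicate j 1, ?_, by simp⟩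
      rw [hrep] at hj ⊢
      exact Multiset.replicate_le_replicate 1 |>.2 (by simpa using hj)

theorem isUnit_of_addOrderOf_eq {n : ℕ} (hn : 2 ≤ n) {g : ZMod n} (hg : addOrderOf g = n) :
    IsUnit g := by
  have : NeZero n := ⟨by omega⟩
  rw [← ZMod.natCast_zmod_val g] at hg ⊢
  rw [ZMod.addOrderOf_coe _ (by omega)] at hg
  rw [ZMod.isUnit_iff_coprime, Nat.coprime_comm]
  rcases Nat.div_eq_self.1 hg with h | h
  · omega
  · exact h

theorem normIdx_nsmul {n : ℕ} (hn : 2 ≤ n) {g : ZMod n} (hg : IsUnit g) (a : ZMod n) :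
    normIdx n g a • g = a := by
  have : NeZero n := ⟨by omega⟩
  have key : ((normIdx n g a : ℕ) : ZMod n) = a * Ring.inverse g := by
    unfold normIdx
    split_ifs with h
    · rw [(ZMod.val_eq_zero _).1 h]
      simp
    · exact ZMod.natCast_zmod_val _
  rw [nsmul_eq_mul, key, mul_assoc, Ring.inverse_mul_cancel _ hg, mul_one]

theorem normIdx_mem_Icc {n : ℕ} (hn : 2 ≤ n) (g a : ZMod n) :
    1 ≤ normIdx n g a ∧ normIdx n g a ≤ n := by
  have : NeZero n := ⟨by omega⟩
  have := ZMod.val_lt (a * Ring.inverse g)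
  unfold normIdx
  split_ifs with h <;> omega

theorem zero_sum_smooth_of_index_one (n : ℕ) (hn : 2 ≤ n)
    (T : Multiset (ZMod n)) (hT : MinimalZeroSum T)
    (hlen : n < 2 * Multiset.card T) (hind : HasIndexOne n T) :
    ∃ g : ZMod n, addOrderOf g = n ∧ ZeroSumGSmooth g T := by
  obtain ⟨⟨g, hg, hnorm⟩, -⟩ := hind
  have hu := isUnit_of_addOrderOf_eq hn hg
  have hn0 : (n : ℚ) ≠ 0 := by
    exact_mod_cast (by omega : n ≠ 0)
  have hsum : (T.map (normIdx n g)).sum = n := by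
    unfold normg at hnorm
    rw [div_eq_one_iff_eq hn0] at hnorm
    exact_mod_cast hnorm
  have hmap : T = (T.map (normIdx n g)).map (fun m => m • g) := by
    rw [Multiset.map_map]
    simp only [Function.comp_def, normIdx_nsmul hn hu, Multiset.map_id']
  have hpos : ∀ m ∈ T.map (normIdx n g), 1 ≤ m := by
    intro m hm
    obtain ⟨a, -, rfl⟩ := Multiset.mem_map.1 hm
    exact (normIdx_mem_Icc hn g a).1
  have hcard : Multiset.card (T.map (normIdx n g)) = Multiset.card T := Multiset.card_map _ _
  generalize T.map (normIdx n g) = c at hsum hmap hpos hcard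
  refine ⟨g, hg, c, hmap, ?_, hpos, hsum, ?_⟩
  · by_contra h1
    have h2 : ∀ m ∈ c, 2 ≤ m := by
      intro m hm
      have := hpos m hm
      have : m ≠ 1 := fun h => h1 (h ▸ hm)
      omega
    have := Multiset.card_nsmul_le_sum h2
    rw [smul_eq_mul] at this
    omega
  · ext x
    constructor
    · intro _
      obtain ⟨h1, h2⟩ := normIdx_mem_Icc hn g x
      exact ⟨normIdx n g x, h1, h2, (normIdx_nsmul hn hu x).symm⟩
    · rintro ⟨j, hj1, hjn, rfl⟩
      obtain ⟨U, hU, rfl⟩ := exists_le_sum_eq _ c rfl hpos (by omega) j (by omega)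
      refine ⟨U.map (fun m => m • g), ?_, ?_, ?_⟩
      · rw [hmap]
        exact Multiset.map_le_map hU
      · intro h0
        rw [Multiset.map_eq_zero] at h0
        simp [h0] at hj1
      · exact (map_multiset_sum (multiplesHom (ZMod n) g) U).symm
end

section
/- Let n ∈ {2, 3, 4, 5, 7}. Then: (a) every minimal zero-sum sequence T over ZMod n with |T| ≥ ⌊n/2⌋ + 1 is zero-sum g-smooth for some g ∈ ZMod n of additive order n; and (b) there exists a minimal zero-sum sequence W over ZMod n with |W| = ⌊n/2⌋ that is not zero-sum g-smooth for any g ∈ ZMod n of additive order n. -/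
/-!
A minimal zero-sum multiset is `(-σ(S)) ::ₘ S` with `S` zero-sum free, and a zero-sum free multiset
over `ZMod n` can be built one element at a time: `a` may be added to `S` exactly when `-a` is not
already a subset sum of `S`. Every such step strictly enlarges the set of subset sums, so the tree
of all zero-sum free sequences has depth less than `n`. `search` walks this tree and tests with
`smoothTest` that each completed sequence of length at least `n / 2 + 1` is zero-sum `g`-smooth for
some generator `g`; `search_sound` turns a successful walk into part (a).

For part (b), the subset sums of a `g`-smooth sequence with `g` a generator exhaust `ZMod n`
(`subSumsZ_eq_univ_of_smooth`), so a minimal zero-sum sequence missing one residue is not smooth.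
The witnesses are `{0}`, `{0}`, `{2, 2}`, `{1, 4}`, `{1, 1, 5}` for `n = 2, 3, 4, 5, 7`.
-/

open Multiset

/-- The sums of all sublists of `S`, the empty one included. -/
def sumsOf {n : ℕ} : List (ZMod n) → Finset (ZMod n)
  | [] => {0}
  | a :: S => sumsOf S ∪ (sumsOf S).image (a + ·)

theorem mem_sumsOf {n : ℕ} (S : List (ZMod n)) (x : ZMod n) :
    x ∈ sumsOf S ↔ ∃ U : Multiset (ZMod n), U ≤ (S : Multiset (ZMod n)) ∧ U.sum = x := by
  induction S generalizing x with
  | nil =>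
    simp only [sumsOf, Finset.mem_singleton, Multiset.coe_nil, Multiset.le_zero]
    constructor
    · rintro rfl
      exact ⟨0, rfl, rfl⟩
    · rintro ⟨U, rfl, rfl⟩
      rfl
  | cons a S ih =>
    simp only [sumsOf, Finset.mem_union, Finset.mem_image, ih]
    rw [← Multiset.cons_coe]
    constructor
    · rintro (⟨U, hU, rfl⟩ | ⟨y, ⟨U, hU, rfl⟩, rfl⟩)
      · exact ⟨U, hU.trans (Multiset.le_cons_self _ _), rfl⟩
      · exact ⟨a ::ₘ U, (Multiset.cons_le_cons_iff a).2 hU, by simp⟩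
    · rintro ⟨U, hU, rfl⟩
      by_cases ha : a ∈ U
      · obtain ⟨V, rfl⟩ := Multiset.exists_cons_of_mem ha
        exact Or.inr ⟨V.sum, ⟨V, (Multiset.cons_le_cons_iff a).1 hU, rfl⟩, by simp⟩
      · exact Or.inl ⟨U, (Multiset.le_cons_of_notMem ha).1 hU, rfl⟩

/-- A decidable condition implying that the zero-sum list `T` is zero-sum `g`-smooth for some `g`.
The generator `g` is recorded through its inverse `h`; the coefficient of `x = m • g` is then
`m = (x * h).val`. -/
def smoothTest {n : ℕ} [NeZero n] (T : List (ZMod n)) : Prop :=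
  (∀ x : ZMod n, x ∈ sumsOf T) ∧
  ∃ h : ZMod n, ((T.map fun x => (x * h).val).sum = n ∧ 1 ∈ T.map fun x => (x * h).val) ∧
    (∀ x ∈ T, 1 ≤ (x * h).val) ∧ ∃ g : ZMod n, h * g = 1

instance {n : ℕ} [NeZero n] (T : List (ZMod n)) : Decidable (smoothTest T) := by
  unfold smoothTest
  infer_instance

theorem addOrderOf_of_mul_eq_one {n : ℕ} {g h : ZMod n} (hg : h * g = 1) : addOrderOf g = n := by
  apply Nat.dvd_antisymm
  · apply addOrderOf_dvd_of_nsmul_eq_zero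
    simp
  · have h1 : addOrderOf g • g = 0 := addOrderOf_nsmul_eq_zero g
    rw [nsmul_eq_mul] at h1
    rw [← ZMod.natCast_eq_zero_iff]
    calc ((addOrderOf g : ℕ) : ZMod n) = h * g * (addOrderOf g : ℕ) := by rw [hg, one_mul]
      _ = h * ((addOrderOf g : ℕ) * g) := by ring
      _ = 0 := by rw [h1, mul_zero]

theorem exists_nsmul_of_addOrderOf {n : ℕ} [NeZero n] {g : ZMod n} (hg : addOrderOf g = n)
    (x : ZMod n) : ∃ j : ℕ, 1 ≤ j ∧ j ≤ n ∧ x = j • g := by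
  have hn : 0 < n := Nat.pos_of_neZero n
  have htop : AddSubgroup.zmultiples g = ⊤ := by
    apply AddSubgroup.eq_top_of_card_eq
    rw [Nat.card_zmultiples, hg, Nat.card_zmod]
  have hx : x ∈ AddSubgroup.zmultiples g := htop ▸ AddSubgroup.mem_top x
  rw [← mem_multiples_iff_mem_zmultiples, mem_multiples_iff_mem_range_addOrderOf, hg] at hx
  obtain ⟨j, hj, rfl⟩ := Finset.mem_image.1 hx
  have hj' := Finset.mem_range.1 hj
  rcases Nat.eq_zero_or_pos j with rfl | hpos
  · exact ⟨n, hn, le_rfl, by simp⟩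
  · exact ⟨j, hpos, hj'.le, rfl⟩

theorem exists_smooth_of_smoothTest {n : ℕ} [NeZero n] {T : List (ZMod n)} (hT : T ≠ [])
    (h0 : T.sum = 0) (h : smoothTest T) :
    ∃ g : ZMod n, addOrderOf g = n ∧ ZeroSumGSmooth g (T : Multiset (ZMod n)) := by
  obtain ⟨hall, h, ⟨hsum, hone⟩, hpos, g, hg⟩ := h
  have hord := addOrderOf_of_mul_eq_one hg
  refine ⟨g, hord, ((T.map fun x => (x * h).val : List ℕ) : Multiset ℕ), ?_, ?_, ?_, ?_, ?_⟩
  · rw [Multiset.map_coe, List.map_map]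
    congr 1
    simp [Function.comp_def, mul_assoc, hg]
  · simpa using hone
  · intro m hm
    obtain ⟨x, hx, rfl⟩ := List.mem_map.1 (Multiset.mem_coe.1 hm)
    exact hpos x hx
  · simpa using hsum
  · ext x
    refine ⟨fun _ => exists_nsmul_of_addOrderOf hord x, fun _ => ?_⟩
    obtain ⟨U, hU, rfl⟩ := (mem_sumsOf T x).1 (hall x)
    -- The empty sub-multiset has the same sum as `T` itself.
    by_cases hU0 : U = 0
    · exact ⟨T, le_rfl, by simpa using hT, by simp [hU0, h0]⟩
    · exact ⟨U, hU, hU0, rfl⟩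

/-- `search k S` checks every zero-sum free extension `S'` of `S`: if `(-σ(S')) :: S'` has length at
least `n / 2 + 1`, it passes `smoothTest`. It fails if more than `k` levels are needed. -/
def search {n : ℕ} [NeZero n] : ℕ → List (ZMod n) → Bool
  | 0, _ => false
  | k + 1, S =>
    decide (n / 2 ≤ S.length → smoothTest (-S.sum :: S)) &&
      decide (∀ a : ZMod n, -a ∈ sumsOf S ∨ search k (a :: S) = true)

theorem search_sound {n : ℕ} [NeZero n] (R : List (ZMod n)) :
    ∀ (k : ℕ) (S : List (ZMod n)), search k S = true →
      ZeroSumFree ((S : Multiset (ZMod n)) + (R : Multiset (ZMod n))) →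
      n / 2 ≤ S.length + R.length →
      ∃ g : ZMod n, addOrderOf g = n ∧
        ZeroSumGSmooth g ((-(S.sum + R.sum)) ::ₘ
          ((S : Multiset (ZMod n)) + (R : Multiset (ZMod n)))) := by
  induction R with
  | nil =>
    intro k S hk _ hlen
    cases k with
    | zero => simp [search] at hk
    | succ k =>
      simp only [search, Bool.and_eq_true, decide_eq_true_eq] at hk
      have := exists_smooth_of_smoothTest (by simp) (by simp) (hk.1 (by simpa using hlen))
      simpa using this
  | cons a R ih =>
    intro k S hk hfree hlen
    cases k with
    | zero => simp [search] at hk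
    | succ k =>
      simp only [search, Bool.and_eq_true, decide_eq_true_eq] at hk
      have hmove : (S : Multiset (ZMod n)) + ((a :: R : List (ZMod n)) : Multiset (ZMod n)) =
          ((a :: S : List (ZMod n)) : Multiset (ZMod n)) + (R : Multiset (ZMod n)) := by
        rw [← Multiset.cons_coe, ← Multiset.cons_coe, Multiset.add_cons, Multiset.cons_add]
      rcases hk.2 a with hmem | hrec
      · exfalso
        obtain ⟨U, hU, hUs⟩ := (mem_sumsOf S _).1 hmem
        refine hfree (a ::ₘ U) ?_ (Multiset.cons_ne_zero) (by simp [hUs])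
        rw [hmove, ← Multiset.cons_coe]
        exact ((Multiset.cons_le_cons_iff a).2 hU).trans (Multiset.le_add_right _ _)
      · rw [hmove] at hfree ⊢
        have := ih k (a :: S) hrec hfree (by simp only [List.length_cons] at hlen ⊢; omega)
        have hsum : S.sum + (a :: R).sum = (a :: S).sum + R.sum := by
          simp only [List.sum_cons]; ring
        rwa [hsum]

theorem smooth_of_search {n : ℕ} [NeZero n] {k : ℕ} (hk : search (n := n) k [] = true)
    (T : Multiset (ZMod n)) (hT : MinimalZeroSum T) (hcard : n / 2 + 1 ≤ Multiset.card T) :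
    ∃ g : ZMod n, addOrderOf g = n ∧ ZeroSumGSmooth g T := by
  obtain ⟨hne, hsum, hmin⟩ := hT
  obtain ⟨b, hb⟩ := Multiset.exists_mem_of_ne_zero hne
  obtain ⟨M, rfl⟩ := Multiset.exists_cons_of_mem hb
  induction M using Quotient.inductionOn with
  | _ R =>
  have hfree : ZeroSumFree (R : Multiset (ZMod n)) := fun U hU hU0 =>
    hmin U (lt_of_le_of_lt hU (Multiset.lt_cons_self _ _)) hU0
  have hbs : b = -R.sum := by
    rw [eq_neg_iff_add_eq_zero]
    simpa using hsum
  have := search_sound R k [] hk (by simpa using hfree) (by simpa using hcard)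
  rw [hbs]
  simpa using this

theorem subSumsZ_eq_univ_of_smooth {n : ℕ} [NeZero n] {g : ZMod n} (hg : addOrderOf g = n)
    {W : Multiset (ZMod n)} (hW : ZeroSumGSmooth g W) : subSumsZ W = Set.univ := by
  obtain ⟨c, -, -, -, -, h⟩ := hW
  rw [h, Set.eq_univ_iff_forall]
  exact exists_nsmul_of_addOrderOf hg

theorem exists_not_smooth {n : ℕ} [NeZero n] (L : List (ZMod n)) (x : ZMod n)
    (hlen : L.length = n / 2) (hL : L ≠ []) (hsum : L.sum = 0)
    (hmin : ∀ U ∈ (L : Multiset (ZMod n)).powerset, U ≠ L → U ≠ 0 → U.sum ≠ 0)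
    (hx : x ∉ sumsOf L) :
    ∃ W : Multiset (ZMod n), MinimalZeroSum W ∧ Multiset.card W = n / 2 ∧
      ∀ g : ZMod n, addOrderOf g = n → ¬ ZeroSumGSmooth g W := by
  refine ⟨L, ⟨by simpa using hL, by simpa using hsum, fun U hU => ?_⟩, by simpa using hlen, ?_⟩
  · exact hmin U (Multiset.mem_powerset.2 hU.le) hU.ne
  · intro g hg hW
    have hmem : x ∈ subSumsZ (L : Multiset (ZMod n)) := by
      rw [subSumsZ_eq_univ_of_smooth hg hW]
      trivial
    obtain ⟨U, hU, -, hUs⟩ := hmem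
    exact hx ((mem_sumsOf L x).2 ⟨U, hU, hUs⟩)

theorem smo_small_n (n : ℕ) (hn : n = 2 ∨ n = 3 ∨ n = 4 ∨ n = 5 ∨ n = 7) :
    (∀ T : Multiset (ZMod n), MinimalZeroSum T → n / 2 + 1 ≤ Multiset.card T →
      ∃ g : ZMod n, addOrderOf g = n ∧ ZeroSumGSmooth g T) ∧
    (∃ W : Multiset (ZMod n), MinimalZeroSum W ∧ Multiset.card W = n / 2 ∧
      ∀ g : ZMod n, addOrderOf g = n → ¬ ZeroSumGSmooth g W) := by
  rcases hn with rfl | rfl | rfl | rfl | rfl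
  · exact ⟨smooth_of_search (k := 2) (by decide +kernel),
      exists_not_smooth [0] 1 (by decide) (by decide) (by decide) (by decide) (by decide)⟩
  · exact ⟨smooth_of_search (k := 3) (by decide +kernel),
      exists_not_smooth [0] 1 (by decide) (by decide) (by decide) (by decide) (by decide)⟩
  · exact ⟨smooth_of_search (k := 4) (by decide +kernel),
      exists_not_smooth [2, 2] 1 (by decide) (by decide) (by decide) (by decide) (by decide)⟩
  · exact ⟨smooth_of_search (k := 5) (by decide +kernel),
      exists_not_smooth [1, 4] 2 (by decide) (by decide) (by decide) (by decide) (by decide)⟩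
  · exact ⟨smooth_of_search (k := 7) (by decide +kernel),
      exists_not_smooth [1, 1, 5] 3 (by decide) (by decide) (by decide) (by decide) (by decide)⟩
end
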